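/- arXiv:math/0407230 — 2 statements merged into one kernel-verified Lean document; each statement's English description precedes it below -/
import Mathlib

section
/- For every 0 ≤ q ≤ n and ω ∈ Ǩ^q, d_Ǩ(P̌ ω) + P̌(d_Ǩ ω) = ω − reš(ω), and moreover P̌ ∘ P̌ = 0. -/
/-!
Setting: `n ≥ 1`, `U ⊆ ℂⁿ` a nonempty convex open set.  Points of `U × U` are
written `p = (z, ζ)` with `z = p.1`, `ζ = p.2`.  For `0 ≤ q ≤ n`,
`Ǩ^q = Λ^q((ℂⁿ)*) ⊗ O(U×U)` is encoded by the coefficients of its elements on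
the basis `ě^I`, where the strictly increasing multi-indices
`I = (i₁ < … < i_q)` are encoded as finsets `I ⊆ Fin n` of cardinality `q`.
-/

open scoped BigOperators

namespace TwistedKoszulDual

variable (n : ℕ)

/-- Points of `ℂⁿ × ℂⁿ`. -/
abbrev Pt (n : ℕ) := (Fin n → ℂ) × (Fin n → ℂ)

/-- A family of coefficients, indexed by the basis vectors `ě^I` of
`Λ^•((ℂⁿ)*)` (strictly increasing multi-indices `I`, encoded as finsets).
An element of `Ǩ^q` is such a family supported on finsets of cardinality `q`,
with holomorphic coefficients (see `MemK`). -/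
abbrev Coeff (n : ℕ) := Finset (Fin n) → Pt n → ℂ

/-- The sign `(-1)^{#{i ∈ I | i < j}}`, so that `ě^j ∧ ě^I = sgn j I • ě^{I ∪ {j}}`
for `j ∉ I`, and `ι_{e_j} ě^I = sgn j (I \ {j}) • ě^{I \ {j}}` for `j ∈ I`. -/
noncomputable def sgn (j : Fin n) (I : Finset (Fin n)) : ℂ :=
  (-1 : ℂ) ^ (I.filter (fun i => i < j)).card

/-- The holomorphic partial derivative `∂f/∂z^j` in the `j`-th coordinate of
the first factor. -/
noncomputable def pd (j : Fin n) (f : Pt n → ℂ) (p : Pt n) : ℂ :=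
  fderiv ℂ f p (Pi.single j 1, 0)

/-- The dual Koszul differential `d_Ǩ : Ǩ^q → Ǩ^{q+1}`: exterior multiplication
by `Σ_i (z^i - ζ^i) ě^i`. -/
noncomputable def dKd (ω : Coeff n) : Coeff n := fun J p =>
  ∑ j ∈ J, sgn n j (J.erase j) * ((p.1 j - p.2 j) * ω (J.erase j) p)

/-- The homotopy operator `P̌ : Ǩ^q → Ǩ^{q-1}`:
`P̌(f ě^I) = Σ_j (∫₀¹ t^{n-|I|} (∂f/∂z^j)(ζ + t(z - ζ), ζ) dt) ι_{e_j} ě^I`. -/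
noncomputable def Pd (ω : Coeff n) : Coeff n := fun J p =>
  ∑ j ∈ Jᶜ, sgn n j J *
    ∫ t in (0:ℝ)..1, (t : ℂ) ^ (n - (J.card + 1)) *
      pd n j (ω (insert j J)) (p.2 + t • (p.1 - p.2), p.2)

/-- The operator `reš`: zero on `Ǩ^q` for `q ≠ n`, and
`reš(f ě^1 ∧ … ∧ ě^n)(z, ζ) = f(ζ, ζ) ě^1 ∧ … ∧ ě^n` on `Ǩ^n`. -/
noncomputable def resd (ω : Coeff n) : Coeff n := fun J p =>
  if J = Finset.univ then ω Finset.univ (p.2, p.2) else 0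

/-- `ω` is an element of `Ǩ^q` over `U × U`: it is supported on multi-indices
of length `q` and its coefficients are holomorphic on `U × U`. -/
def MemK (U : Set (Fin n → ℂ)) (q : ℕ) (ω : Coeff n) : Prop :=
  (∀ I : Finset (Fin n), I.card ≠ q → ω I = 0) ∧
  ∀ I : Finset (Fin n), DifferentiableOn ℂ (ω I) (U ×ˢ U)

end TwistedKoszulDual

namespace TwistedKoszulDual

/-!
Fix `J` and put `m = n - |J|`. In the `ě^J`-coefficient of `d_Ǩ P̌ ω + P̌ d_Ǩ ω`, the terms coming
from `ω J` add up to `∫₀¹ ∂ₜ(tᵐ (ω J)(ζ + t(z - ζ), ζ)) dt`: each `j ∈ J` contributes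
`(zʲ - ζʲ) ∂ⱼ` through `d_Ǩ P̌`, each of the `m` indices `j ∉ J` contributes the same through
`P̌ d_Ǩ`, together with one summand `tᵐ⁻¹ ω J` from differentiating the factor `zʲ - ζʲ`. The
fundamental theorem of calculus gives `ω J - reš ω J`, since the boundary term at `t = 0` survives
only for `m = 0`. The terms coming from the other coefficients of `ω` cancel because exterior
multiplication and contraction anticommute. Finally `P̌ ∘ P̌ = 0` because second partial derivatives
are symmetric while double contractions are antisymmetric.

That partial derivatives of holomorphic functions of several variables are again holomorphic follows
from Cauchy's formula on complex lines, differentiated under the integral sign; the continuity of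
the differential which this requires comes from the Schwarz lemma.
-/

open Set Metric Filter Topology MeasureTheory Function Complex

section ParametricIntegral

lemma exists_eventually_forall_norm_le {X Y F : Type*} [TopologicalSpace X] [TopologicalSpace Y]
    [SeminormedAddCommGroup F] {g : X → Y → F} {S : Set X} {K : Set Y} (hS : IsOpen S)
    (hK : IsCompact K) (hg : ContinuousOn (uncurry g) (S ×ˢ K)) {x₀ : X} (hx₀ : x₀ ∈ S) :
    ∃ C, ∀ᶠ x in 𝓝 x₀, ∀ y ∈ K, ‖g x y‖ ≤ C := by
  obtain ⟨C, hC⟩ := hK.exists_bound_of_continuousOn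
    (hg.comp (f := fun y => (x₀, y)) (by fun_prop) fun y hy => ⟨hx₀, hy⟩)
  have near : ∀ y ∈ K, ∀ᶠ z : X × Y in 𝓝 (x₀, y), z.2 ∈ K → ‖g z.1 z.2‖ ≤ C + 1 := by
    intro y hy
    have lt_near := (hg (x₀, y) ⟨hx₀, hy⟩).norm.eventually_lt_const
      ((hC y hy).trans_lt (lt_add_one C))
    filter_upwards [eventually_nhdsWithin_iff.1 lt_near,
      (hS.preimage continuous_fst).mem_nhds (x := (x₀, y)) hx₀] with z hz hzS hzK
    exact (hz ⟨hzS, hzK⟩).le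
  have uniform : ∀ᶠ x in 𝓝 x₀, ∀ y ∈ K, y ∈ K → ‖g x y‖ ≤ C + 1 :=
    hK.eventually_forall_of_forall_eventually near
  exact ⟨C + 1, uniform.mono fun x hx y hy => hx y hy hy⟩

variable {𝕜 E F : Type*} [RCLike 𝕜] [NormedAddCommGroup E] [NormedSpace 𝕜 E]
  [NormedAddCommGroup F] [NormedSpace ℝ F] [NormedSpace 𝕜 F]

lemma hasFDerivAt_intervalIntegral_of_continuousOn {a b : ℝ} {S : Set E} (hS : IsOpen S)
    {g : E → ℝ → F} {g' : E → ℝ → E →L[𝕜] F} (hg : ∀ x ∈ S, ContinuousOn (g x) (uIcc a b))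
    (hg' : ContinuousOn (uncurry g') (S ×ˢ uIcc a b))
    (hderiv : ∀ x ∈ S, ∀ t ∈ uIcc a b, HasFDerivAt (g · t) (g' x t) x) {x₀ : E} (hx₀ : x₀ ∈ S) :
    HasFDerivAt (fun x => ∫ t in a..b, g x t) (∫ t in a..b, g' x₀ t) x₀ := by
  obtain ⟨C, hC⟩ := exists_eventually_forall_norm_le hS isCompact_uIcc hg' hx₀
  have hg'₀ : ContinuousOn (g' x₀) (uIcc a b) :=
    hg'.comp (f := fun t => (x₀, t)) (by fun_prop) fun t ht => ⟨hx₀, ht⟩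
  refine intervalIntegral.hasFDerivAt_integral_of_dominated_of_fderiv_le (bound := fun _ => C)
    (inter_mem (hS.mem_nhds hx₀) hC) ?_ (hg x₀ hx₀).intervalIntegrable
    (hg'₀.mono uIoc_subset_uIcc |>.aestronglyMeasurable measurableSet_uIoc) ?_ (by simp) ?_
  · filter_upwards [hS.mem_nhds hx₀] with x hx
    exact ((hg x hx).mono uIoc_subset_uIcc).aestronglyMeasurable measurableSet_uIoc
  · exact .of_forall fun t ht x hx => hx.2 t (uIoc_subset_uIcc ht)
  · exact .of_forall fun t ht x hx => hderiv x hx.1 t (uIoc_subset_uIcc ht)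

end ParametricIntegral

section Holomorphic

variable {E F : Type*} [NormedAddCommGroup E] [NormedSpace ℂ E] [NormedAddCommGroup F]
  [NormedSpace ℂ F] {S : Set E} {f : E → F}

lemma norm_fderiv_le_of_forall_mem_ball_norm_le {c : E} {R M : ℝ}
    (hf : DifferentiableOn ℂ f (ball c R)) (hM : ∀ x ∈ ball c R, ‖f x‖ ≤ M) (hR : 0 < R) :
    ‖fderiv ℂ f c‖ ≤ 2 * M / R := by
  refine norm_fderiv_le_div_of_mapsTo_ball hf (fun x hx => ?_) hR
  rw [mem_closedBall_iff_norm]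
  linarith [norm_sub_le (f x) (f c), hM x hx, hM c (mem_ball_self hR)]

lemma exists_eventually_norm_fderiv_le (hS : IsOpen S) (hf : DifferentiableOn ℂ f S) {x₀ : E}
    (hx₀ : x₀ ∈ S) : ∃ C, ∀ᶠ x in 𝓝 x₀, ‖fderiv ℂ f x‖ ≤ C := by
  have f_bounded : ∀ᶠ x in 𝓝 x₀, ‖f x‖ < ‖f x₀‖ + 1 :=
    (hf.continuousOn.continuousAt (hS.mem_nhds hx₀)).norm.eventually_lt_const (lt_add_one _)
  obtain ⟨R, hR, hball⟩ := eventually_nhds_iff_ball.1 ((hS.eventually_mem hx₀).and f_bounded)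
  refine ⟨2 * (‖f x₀‖ + 1) / (R / 2),
    eventually_nhds_iff_ball.2 ⟨R / 2, half_pos hR, fun x hx => ?_⟩⟩
  have ball_sub : ball x (R / 2) ⊆ ball x₀ R := ball_subset_ball' (by linarith [mem_ball.1 hx])
  exact norm_fderiv_le_of_forall_mem_ball_norm_le (hf.mono fun y hy => (hball y (ball_sub hy)).1)
    (fun y hy => (hball y (ball_sub hy)).2.le) (half_pos hR)

lemma norm_fderiv_sub_fderiv_le {x x₀ : E} {R C : ℝ}
    (hdiff : ∀ y ∈ ball x₀ R, DifferentiableAt ℂ f y) (hC : ∀ y ∈ ball x₀ R, ‖fderiv ℂ f y‖ ≤ C)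
    (hx : dist x x₀ < R / 2) :
    ‖fderiv ℂ f x - fderiv ℂ f x₀‖ ≤ 2 * C / (R / 2) * dist x x₀ := by
  -- The Cauchy estimate is applied to the increment `y ↦ f (y + (x - x₀)) - f y`.
  have half_pos : 0 < R / 2 := dist_nonneg.trans_lt hx
  have mem_ball_shift : ∀ y ∈ ball x₀ (R / 2), y ∈ ball x₀ R ∧ y + (x - x₀) ∈ ball x₀ R := by
    intro y hy
    rw [dist_eq_norm] at hx
    simp only [mem_ball_iff_norm] at hy ⊢
    have := norm_add_le (y - x₀) (x - x₀)
    rw [sub_add_eq_add_sub] at this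
    constructor <;> linarith
  have increment_hasFDerivAt : ∀ y ∈ ball x₀ (R / 2), HasFDerivAt
      (fun y => f (y + (x - x₀)) - f y) (fderiv ℂ f (y + (x - x₀)) - fderiv ℂ f y) y :=
    fun y hy =>
      ((hasFDerivAt_comp_add_right _).2 (hdiff _ (mem_ball_shift y hy).2).hasFDerivAt).sub
        (hdiff y (mem_ball_shift y hy).1).hasFDerivAt
  have increment_le : ∀ y ∈ ball x₀ (R / 2), ‖f (y + (x - x₀)) - f y‖ ≤ C * dist x x₀ := by
    intro y hy
    have := (convex_ball x₀ R).norm_image_sub_le_of_norm_fderiv_le hdiff hC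
      (mem_ball_shift y hy).1 (mem_ball_shift y hy).2
    rwa [add_sub_cancel_left, ← dist_eq_norm x] at this
  have fderiv_increment := (increment_hasFDerivAt x₀ (mem_ball_self half_pos)).fderiv
  rw [add_sub_cancel] at fderiv_increment
  rw [← fderiv_increment]
  calc _ ≤ 2 * (C * dist x x₀) / (R / 2) :=
        norm_fderiv_le_of_forall_mem_ball_norm_le
          (fun y hy => (increment_hasFDerivAt y hy).differentiableAt.differentiableWithinAt)
          increment_le half_pos
    _ = 2 * C / (R / 2) * dist x x₀ := by ring

lemma continuousOn_fderiv_of_differentiableOn (hS : IsOpen S) (hf : DifferentiableOn ℂ f S) :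
    ContinuousOn (fderiv ℂ f) S := by
  refine fun x₀ hx₀ => ContinuousAt.continuousWithinAt ?_
  obtain ⟨C, hC⟩ := exists_eventually_norm_fderiv_le hS hf hx₀
  obtain ⟨R, hR, hball⟩ := eventually_nhds_iff_ball.1 ((hS.eventually_mem hx₀).and hC)
  refine continuousAt_of_locally_lipschitz (half_pos hR) (2 * C / (R / 2)) fun x hx => ?_
  rw [dist_eq_norm (fderiv ℂ f x)]
  exact norm_fderiv_sub_fderiv_le
    (fun y hy => hf.differentiableAt (hS.mem_nhds (hball y hy).1)) (fun y hy => (hball y hy).2) hx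

lemma differentiableOn_cderiv_comp_line (hS : IsOpen S) (hf : DifferentiableOn ℂ f S) {v : E}
    {V : Set E} (hV : IsOpen V) {r : ℝ} (hr : 0 < r)
    (hVS : ∀ x ∈ V, ∀ w ∈ sphere (0 : ℂ) r, x + w • v ∈ S) :
    DifferentiableOn ℂ (fun x => cderiv r (fun w => f (x + w • v)) 0) V := by
  let c : ℝ → ℂ := fun θ => deriv (circleMap 0 r) θ * ((circleMap 0 r θ - 0) ^ 2)⁻¹
  have circle_cont : Continuous (circleMap 0 r) := continuous_circleMap 0 r
  have c_cont : Continuous c := by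
    simp only [c, deriv_circleMap, sub_zero]
    exact (circle_cont.mul continuous_const).mul
      ((circle_cont.pow 2).inv₀ fun θ => pow_ne_zero _ (circleMap_ne_center hr.ne'))
  have line_mem : ∀ x ∈ V, ∀ θ, x + circleMap 0 r θ • v ∈ S := fun x hx θ =>
    hVS x hx _ (circleMap_mem_sphere 0 hr.le θ)
  have cderiv_eq : (fun x => cderiv r (fun w => f (x + w • v)) 0) = fun x =>
      (2 * Real.pi * I : ℂ)⁻¹ • ∫ θ in 0..2 * Real.pi, c θ • f (x + circleMap 0 r θ • v) := by
    simp only [cderiv, circleIntegral, smul_smul, c]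
  rw [cderiv_eq]
  refine fun x₀ hx₀ => DifferentiableAt.differentiableWithinAt (.const_smul ?_ _)
  refine (hasFDerivAt_intervalIntegral_of_continuousOn (𝕜 := ℂ) hV
    (g' := fun x θ => c θ • fderiv ℂ f (x + circleMap 0 r θ • v))
    (fun x hx => ?_) ?_ (fun x hx θ _ => ?_) hx₀).differentiableAt
  · exact c_cont.continuousOn.smul
      (hf.continuousOn.comp (by fun_prop) fun θ _ => line_mem x hx θ)
  · exact (c_cont.comp continuous_snd).continuousOn.smul
      ((continuousOn_fderiv_of_differentiableOn hS hf).comp (by fun_prop)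
        fun z hz => line_mem z.1 hz.1 z.2)
  · exact ((hasFDerivAt_comp_add_right _).2
      (hf.differentiableAt (hS.mem_nhds (line_mem x hx θ))).hasFDerivAt).const_smul (c θ)

variable [CompleteSpace F]

lemma fderiv_apply_eq_cderiv {x v : E} {r : ℝ} (hr : 0 < r) {W : Set ℂ} (hW : IsOpen W)
    (hrW : closedBall 0 r ⊆ W) (hf : ∀ w ∈ W, DifferentiableAt ℂ f (x + w • v)) :
    fderiv ℂ f x v = cderiv r (fun w => f (x + w • v)) 0 := by
  have line_diff : DifferentiableOn ℂ (fun w : ℂ => f (x + w • v)) W := fun w hw =>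
    ((hf w hw).comp w (by fun_prop)).differentiableWithinAt
  have hx : DifferentiableAt ℂ f x := by simpa using hf 0 (hrW (mem_closedBall_self hr.le))
  rw [cderiv_eq_deriv hW line_diff hr hrW, ← hx.lineDeriv_eq_fderiv, lineDeriv]

lemma differentiableOn_fderiv_apply (hS : IsOpen S) (hf : DifferentiableOn ℂ f S) (v : E) :
    DifferentiableOn ℂ (fun x => fderiv ℂ f x v) S := by
  refine fun x₀ hx₀ => DifferentiableAt.differentiableWithinAt ?_
  have nhd : (fun z : E × ℂ => z.1 + z.2 • v) ⁻¹' S ∈ 𝓝 (x₀, 0) :=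
    ContinuousAt.preimage_mem_nhds (by fun_prop) (hS.mem_nhds (by simpa using hx₀))
  obtain ⟨V, W, hV, hx₀V, hW, h0W, hVW⟩ := mem_nhds_prod_iff'.1 nhd
  have line_mem : ∀ x ∈ V, ∀ w ∈ W, x + w • v ∈ S := fun x hx w hw => hVW (mk_mem_prod hx hw)
  obtain ⟨r, hr, hrW⟩ := nhds_basis_closedBall.mem_iff.1 (hW.mem_nhds h0W)
  have fderiv_eq : ∀ x ∈ V, fderiv ℂ f x v = cderiv r (fun w => f (x + w • v)) 0 := fun x hx =>
    fderiv_apply_eq_cderiv hr hW hrW fun w hw =>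
      hf.differentiableAt (hS.mem_nhds (line_mem x hx w hw))
  have cderiv_diff := differentiableOn_cderiv_comp_line hS hf hV hr
    fun x hx w hw => line_mem x hx w (hrW (sphere_subset_closedBall hw))
  exact (cderiv_diff.congr fderiv_eq).differentiableAt (hV.mem_nhds hx₀V)

lemma contDiffOn_of_isOpen_of_differentiableOn [FiniteDimensional ℂ E] (hS : IsOpen S) (k : ℕ)
    (hf : DifferentiableOn ℂ f S) : ContDiffOn ℂ k f S := by
  induction k generalizing f with
  | zero => exact contDiffOn_zero.2 hf.continuousOn
  | succ k ih =>
    push_cast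
    rw [contDiffOn_succ_iff_fderiv_of_isOpen hS, contDiffOn_clm_apply]
    exact ⟨hf, by simp, fun v => ih (differentiableOn_fderiv_apply hS hf v)⟩

lemma fderiv_fderiv_apply_comm [FiniteDimensional ℂ E] (hS : IsOpen S)
    (hf : DifferentiableOn ℂ f S) {x : E} (hx : x ∈ S) (v w : E) :
    fderiv ℂ (fun y => fderiv ℂ f y v) x w = fderiv ℂ (fun y => fderiv ℂ f y w) x v := by
  have hf2 : ContDiffAt ℂ 2 f x :=
    (contDiffOn_of_isOpen_of_differentiableOn hS 2 hf).contDiffAt (hS.mem_nhds hx)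
  have hdiff : DifferentiableAt ℂ (fderiv ℂ f) x :=
    (hf2.fderiv_right (m := 1) (by norm_num)).differentiableAt (by simp)
  have second_deriv : ∀ u y, fderiv ℂ (fun z => fderiv ℂ f z u) x y =
      fderiv ℂ (fderiv ℂ f) x y u := by
    intro u y
    rw [fderiv_clm_apply hdiff (differentiableAt_const u)]
    simp
  rw [second_deriv, second_deriv]
  exact (hf2.isSymmSndFDerivAt (by simp)).eq w v

end Holomorphic

section RayIntegral

variable {V : Type*} [NormedAddCommGroup V] [NormedSpace ℂ V] {S : Set (V × V)} {g h : V × V → ℂ}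
  {p : V × V}

/-- The contraction `(z, ζ) ↦ (ζ + t (z - ζ), ζ)` of `V × V` towards the diagonal, along which the
homotopy operator integrates; it is bundled as a `ℂ`-linear map to be its own derivative. -/
noncomputable def diagContraction (t : ℝ) : V × V →L[ℂ] V × V :=
  ContinuousLinearMap.inl ℂ V V ∘L (.snd ℂ V V + (t : ℂ) • (.fst ℂ V V - .snd ℂ V V)) +
    ContinuousLinearMap.inr ℂ V V ∘L .snd ℂ V V

lemma diagContraction_apply (t : ℝ) (p : V × V) :
    diagContraction t p = (p.2 + (t : ℂ) • (p.1 - p.2), p.2) := by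
  simp [diagContraction]

lemma continuous_diagContraction : Continuous (diagContraction : ℝ → V × V →L[ℂ] V × V) := by
  unfold diagContraction
  fun_prop

lemma hasDerivAt_diagContraction_apply (t : ℝ) (p : V × V) :
    HasDerivAt (diagContraction · p) (p.1 - p.2, 0) t := by
  simp only [diagContraction_apply]
  refine HasDerivAt.prodMk ?_ (hasDerivAt_const _ _)
  simpa using (HasDerivAt.ofReal_comp (hasDerivAt_id t)).smul_const (p.1 - p.2) |>.const_add p.2

/-- `S ⊆ V × V` is star-shaped towards the diagonal: with `(z, ζ)` it contains the segment from
`(z, ζ)` to `(ζ, ζ)`. -/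
def DiagStarShaped (S : Set (V × V)) : Prop :=
  ∀ t ∈ Icc (0 : ℝ) 1, MapsTo (diagContraction t) S S

lemma diagStarShaped_prod_self {U : Set V} (hU : Convex ℝ U) : DiagStarShaped (U ×ˢ U) := by
  intro t ht p hp
  rw [diagContraction_apply, Complex.coe_smul]
  exact ⟨hU.add_smul_sub_mem hp.2 hp.1 ht, hp.2⟩

/-- The integral `∫₀¹ tᵐ g(ζ + t(z - ζ), ζ) dt` occurring in the homotopy operator. -/
noncomputable def rayIntegral (m : ℕ) (g : V × V → ℂ) (p : V × V) : ℂ :=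
  ∫ t in (0 : ℝ)..1, (t : ℂ) ^ m * g (diagContraction t p)

lemma continuousOn_pow_mul_comp_diagContraction (hstar : DiagStarShaped S) (hg : ContinuousOn g S)
    (m : ℕ) (hp : p ∈ S) :
    ContinuousOn (fun t : ℝ => (t : ℂ) ^ m * g (diagContraction t p)) (uIcc 0 1) := by
  rw [uIcc_of_le zero_le_one]
  have path_cont : Continuous fun t : ℝ => diagContraction t p :=
    continuous_diagContraction.clm_apply continuous_const
  exact ContinuousOn.mul (by fun_prop)
    (hg.comp path_cont.continuousOn fun t ht => hstar t ht hp)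

lemma intervalIntegrable_pow_mul_comp_diagContraction (hstar : DiagStarShaped S)
    (hg : ContinuousOn g S) (m : ℕ) (hp : p ∈ S) :
    IntervalIntegrable (fun t : ℝ => (t : ℂ) ^ m * g (diagContraction t p)) volume 0 1 :=
  (continuousOn_pow_mul_comp_diagContraction hstar hg m hp).intervalIntegrable

lemma rayIntegral_congr (hstar : DiagStarShaped S) (hgh : EqOn g h S) (m : ℕ) (hp : p ∈ S) :
    rayIntegral m g p = rayIntegral m h p := by
  refine intervalIntegral.integral_congr fun t ht => ?_
  rw [uIcc_of_le zero_le_one] at ht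
  simp only [hgh (hstar t ht hp)]

lemma rayIntegral_zero (m : ℕ) (p : V × V) : rayIntegral m (fun _ => 0) p = 0 := by
  simp [rayIntegral]

lemma rayIntegral_add (hstar : DiagStarShaped S) (hg : ContinuousOn g S) (hh : ContinuousOn h S)
    (m : ℕ) (hp : p ∈ S) :
    rayIntegral m (fun x => g x + h x) p = rayIntegral m g p + rayIntegral m h p := by
  simp only [rayIntegral, mul_add]
  exact intervalIntegral.integral_add
    (intervalIntegrable_pow_mul_comp_diagContraction hstar hg m hp)
    (intervalIntegrable_pow_mul_comp_diagContraction hstar hh m hp)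

lemma rayIntegral_sum_const_mul (hstar : DiagStarShaped S) {ι : Type*} (s : Finset ι) (c : ι → ℂ)
    {G : ι → V × V → ℂ} (hG : ∀ i ∈ s, ContinuousOn (G i) S) (m : ℕ) (hp : p ∈ S) :
    rayIntegral m (fun x => ∑ i ∈ s, c i * G i x) p = ∑ i ∈ s, c i * rayIntegral m (G i) p := by
  simp only [rayIntegral, ← intervalIntegral.integral_const_mul, Finset.mul_sum]
  rw [← intervalIntegral.integral_finsetSum fun i hi =>
    (intervalIntegrable_pow_mul_comp_diagContraction hstar (hG i hi) m hp).const_mul _]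
  simp only [mul_left_comm]

lemma continuousOn_pow_smul_fderiv_comp_diagContraction (hS : IsOpen S)
    (hstar : DiagStarShaped S) (hg : DifferentiableOn ℂ g S) (m : ℕ) :
    ContinuousOn (uncurry fun (x : V × V) (t : ℝ) => (t : ℂ) ^ m •
      (fderiv ℂ g (diagContraction t x)).comp (diagContraction t)) (S ×ˢ uIcc 0 1) := by
  rw [uIcc_of_le zero_le_one]
  have contraction_cont : Continuous fun z : (V × V) × ℝ => diagContraction (V := V) z.2 :=
    continuous_diagContraction.comp continuous_snd
  have fderiv_cont : ContinuousOn (fun z : (V × V) × ℝ => fderiv ℂ g (diagContraction z.2 z.1))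
      (S ×ˢ Icc 0 1) :=
    (continuousOn_fderiv_of_differentiableOn hS hg).comp
      (contraction_cont.clm_apply continuous_fst).continuousOn fun z hz => hstar z.2 hz.2 hz.1
  have pow_cont : Continuous fun z : (V × V) × ℝ => (z.2 : ℂ) ^ m := by fun_prop
  exact pow_cont.continuousOn.smul (fderiv_cont.clm_comp contraction_cont.continuousOn)

lemma hasFDerivAt_rayIntegral (hS : IsOpen S) (hstar : DiagStarShaped S)
    (hg : DifferentiableOn ℂ g S) (m : ℕ) (hp : p ∈ S) :
    HasFDerivAt (rayIntegral m g) (∫ t in (0 : ℝ)..1,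
      (t : ℂ) ^ m • (fderiv ℂ g (diagContraction t p)).comp (diagContraction t)) p := by
  refine hasFDerivAt_intervalIntegral_of_continuousOn hS
    (fun x hx => continuousOn_pow_mul_comp_diagContraction hstar hg.continuousOn m hx)
    (continuousOn_pow_smul_fderiv_comp_diagContraction hS hstar hg m) (fun x hx t ht => ?_) hp
  rw [uIcc_of_le zero_le_one] at ht
  have hgx := (hg.differentiableAt (hS.mem_nhds (hstar t ht hx))).hasFDerivAt
  exact (hgx.comp x (diagContraction (V := V) t).hasFDerivAt).const_mul _

lemma differentiableOn_rayIntegral (hS : IsOpen S) (hstar : DiagStarShaped S)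
    (hg : DifferentiableOn ℂ g S) (m : ℕ) : DifferentiableOn ℂ (rayIntegral m g) S :=
  fun _ hx => (hasFDerivAt_rayIntegral hS hstar hg m hx).differentiableAt.differentiableWithinAt

lemma fderiv_rayIntegral_apply (hS : IsOpen S) (hstar : DiagStarShaped S)
    (hg : DifferentiableOn ℂ g S) (m : ℕ) (hp : p ∈ S) (v : V) :
    fderiv ℂ (rayIntegral m g) p (v, 0) =
      rayIntegral (m + 1) (fun x => fderiv ℂ g x (v, 0)) p := by
  have integrable : IntervalIntegrable (fun t : ℝ => (t : ℂ) ^ m •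
      (fderiv ℂ g (diagContraction t p)).comp (diagContraction t)) volume 0 1 :=
    ((continuousOn_pow_smul_fderiv_comp_diagContraction hS hstar hg m).comp
      (f := fun t => (p, t)) (by fun_prop) fun t ht => ⟨hp, ht⟩).intervalIntegrable
  have contraction_horizontal (t : ℝ) : diagContraction t (v, (0 : V)) = (t : ℂ) • (v, 0) := by
    simp [diagContraction_apply]
  rw [(hasFDerivAt_rayIntegral hS hstar hg m hp).fderiv,
    ContinuousLinearMap.intervalIntegral_apply integrable]
  refine intervalIntegral.integral_congr fun t _ => ?_
  simp only [FunLike.coe_smul, Pi.smul_apply, ContinuousLinearMap.comp_apply,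
    contraction_horizontal, map_smul, smul_eq_mul]
  ring

lemma hasDerivAt_pow_mul_comp_diagContraction {t : ℝ}
    (hg : DifferentiableAt ℂ g (diagContraction t p)) (m : ℕ) :
    HasDerivAt (fun t : ℝ => (t : ℂ) ^ m * g (diagContraction t p))
      (m * ((t : ℂ) ^ (m - 1) * g (diagContraction t p)) +
        (t : ℂ) ^ m * fderiv ℂ g (diagContraction t p) (p.1 - p.2, 0)) t := by
  have pow_deriv : HasDerivAt (fun t : ℝ => (t : ℂ) ^ m) (m * (t : ℂ) ^ (m - 1)) t := by
    simpa using (HasDerivAt.ofReal_comp (hasDerivAt_id t)).fun_pow m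
  have g_deriv := (hg.hasFDerivAt.restrictScalars ℝ).comp_hasDerivAt t
    (hasDerivAt_diagContraction_apply t p)
  exact (pow_deriv.fun_mul g_deriv).congr_deriv (by simp [mul_assoc])

/-- The fundamental theorem of calculus for `t ↦ tᵐ g(ζ + t(z - ζ), ζ)` on `[0, 1]`. For `m = 0`
the truncated exponent `m - 1` is harmless because of the factor `m`. -/
lemma rayIntegral_fderiv_add_mul_rayIntegral (hS : IsOpen S) (hstar : DiagStarShaped S)
    (hg : DifferentiableOn ℂ g S) (m : ℕ) (hp : p ∈ S) :
    rayIntegral m (fun x => fderiv ℂ g x (p.1 - p.2, 0)) p + m * rayIntegral (m - 1) g p =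
      g p - 0 ^ m * g (p.2, p.2) := by
  have integrable := (intervalIntegrable_pow_mul_comp_diagContraction hstar
    hg.continuousOn (m - 1) hp).const_mul (m : ℂ)
  have integrable' := intervalIntegrable_pow_mul_comp_diagContraction hstar
    ((continuousOn_fderiv_of_differentiableOn hS hg).clm_apply
      (continuousOn_const (c := (p.1 - p.2, 0)))) m hp
  have ftc := intervalIntegral.integral_eq_sub_of_hasDerivAt (fun t ht =>
    hasDerivAt_pow_mul_comp_diagContraction (hg.differentiableAt (hS.mem_nhds
      (hstar t (uIcc_of_le (zero_le_one' ℝ) ▸ ht) hp))) m) (integrable.add integrable')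
  rw [intervalIntegral.integral_add integrable integrable',
    intervalIntegral.integral_const_mul, add_comm] at ftc
  simpa [rayIntegral, diagContraction_apply] using ftc

end RayIntegral

section PartialDerivative

variable {n : ℕ} {S : Set (Pt n)} {g : Pt n → ℂ} {p : Pt n}

lemma differentiableOn_pd (hS : IsOpen S) (hg : DifferentiableOn ℂ g S) (j : Fin n) :
    DifferentiableOn ℂ (pd n j g) S :=
  differentiableOn_fderiv_apply hS hg _

lemma pd_comm (hS : IsOpen S) (hg : DifferentiableOn ℂ g S) (hp : p ∈ S) (j k : Fin n) :
    pd n j (pd n k g) p = pd n k (pd n j g) p :=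
  fderiv_fderiv_apply_comm hS hg hp _ _

lemma pd_sum_const_mul {ι : Type*} {s : Finset ι} {G : ι → Pt n → ℂ}
    (hG : ∀ i ∈ s, DifferentiableAt ℂ (G i) p) (c : ι → ℂ) (k : Fin n) :
    pd n k (fun x => ∑ i ∈ s, c i * G i x) p = ∑ i ∈ s, c i * pd n k (G i) p := by
  have sum_deriv := HasFDerivAt.fun_sum fun i hi => (hG i hi).hasFDerivAt.const_mul (c i)
  simp [pd, sum_deriv.fderiv]

lemma pd_coord_mul (hg : DifferentiableAt ℂ g p) (j k : Fin n) :
    pd n k (fun x => (x.1 j - x.2 j) * g x) p =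
      (if j = k then g p else 0) + (p.1 j - p.2 j) * pd n k g p := by
  let coord : Pt n →L[ℂ] ℂ :=
    ContinuousLinearMap.proj (R := ℂ) (φ := fun _ : Fin n => ℂ) j ∘L
      (ContinuousLinearMap.fst ℂ _ _ - ContinuousLinearMap.snd ℂ _ _)
  have coord_deriv : HasFDerivAt (fun x : Pt n => x.1 j - x.2 j) coord p := coord.hasFDerivAt
  simp [pd, (coord_deriv.fun_mul hg.hasFDerivAt).fderiv, coord, Pi.single_apply, add_comm]

lemma fderiv_apply_eq_sum_pd (g : Pt n → ℂ) (p : Pt n) (v : Fin n → ℂ) :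
    fderiv ℂ g p (v, 0) = ∑ j, v j * pd n j g p := by
  have v_eq : ((v, 0) : Pt n) = ∑ j, v j • ((Pi.single j 1, 0) : Pt n) := by
    ext i <;> simp [Prod.fst_sum, Prod.snd_sum, Finset.sum_apply, Pi.single_apply]
  simp only [v_eq, map_sum, map_smul, smul_eq_mul, pd]

lemma pd_rayIntegral (hS : IsOpen S) (hstar : DiagStarShaped S) (hg : DifferentiableOn ℂ g S)
    (m : ℕ) (hp : p ∈ S) (k : Fin n) :
    pd n k (rayIntegral m g) p = rayIntegral (m + 1) (pd n k g) p :=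
  fderiv_rayIntegral_apply hS hstar hg m hp _

lemma rayIntegral_coord_mul (m : ℕ) (g : Pt n → ℂ) (p : Pt n) (j : Fin n) :
    rayIntegral m (fun x : Pt n => (x.1 j - x.2 j) * g x) p =
      (p.1 j - p.2 j) * rayIntegral (m + 1) g p := by
  simp only [rayIntegral, ← intervalIntegral.integral_const_mul]
  refine intervalIntegral.integral_congr fun t _ => ?_
  simp only [diagContraction_apply, Pi.add_apply, Pi.smul_apply, Pi.sub_apply, smul_eq_mul]
  ring

lemma rayIntegral_pd_coord_mul (hS : IsOpen S) (hstar : DiagStarShaped S)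
    (hg : DifferentiableOn ℂ g S) (m : ℕ) (hp : p ∈ S) (j k : Fin n) :
    rayIntegral m (pd n k fun x => (x.1 j - x.2 j) * g x) p =
      (if j = k then rayIntegral m g p else 0) +
        (p.1 j - p.2 j) * rayIntegral (m + 1) (pd n k g) p := by
  have pd_eq : EqOn (pd n k fun x => (x.1 j - x.2 j) * g x)
      (fun x => (if j = k then g x else 0) + (x.1 j - x.2 j) * pd n k g x) S := fun x hx =>
    pd_coord_mul (hg.differentiableAt (hS.mem_nhds hx)) j k
  have ite_cont : ContinuousOn (fun x => if j = k then g x else 0) S := by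
    split_ifs
    exacts [hg.continuousOn, continuousOn_const]
  have mul_cont : ContinuousOn (fun x : Pt n => (x.1 j - x.2 j) * pd n k g x) S :=
    ContinuousOn.mul (by fun_prop) (differentiableOn_pd hS hg k).continuousOn
  rw [rayIntegral_congr hstar pd_eq m hp, rayIntegral_add hstar ite_cont mul_cont m hp,
    rayIntegral_coord_mul]
  split_ifs <;> simp only [rayIntegral_zero]

lemma sum_coord_mul_rayIntegral_pd (hS : IsOpen S) (hstar : DiagStarShaped S)
    (hg : DifferentiableOn ℂ g S) (m : ℕ) (hp : p ∈ S) :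
    ∑ j, (p.1 j - p.2 j) * rayIntegral m (pd n j g) p + m * rayIntegral (m - 1) g p =
      g p - 0 ^ m * g (p.2, p.2) := by
  rw [← rayIntegral_fderiv_add_mul_rayIntegral hS hstar hg m hp,
    ← rayIntegral_sum_const_mul hstar _ _ (fun j _ => (differentiableOn_pd hS hg j).continuousOn)
      m hp]
  simp only [fderiv_apply_eq_sum_pd, Pi.sub_apply]

end PartialDerivative

section Antisymmetry

lemma sum_sum_erase_eq_zero_of_antisymm {ι M : Type*} [DecidableEq ι] [AddCommMonoid M]
    {s : Finset ι} {a : ι → ι → M} (ha : ∀ k ∈ s, ∀ j ∈ s, k ≠ j → a k j + a j k = 0) :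
    ∑ k ∈ s, ∑ j ∈ s.erase k, a k j = 0 := by
  rw [Finset.sum_sigma']
  refine Finset.sum_involution (fun x _ => ⟨x.2, x.1⟩) ?_ ?_ ?_ ?_
  all_goals grind

variable {n : ℕ} {I : Finset (Fin n)} {j k : Fin n}

lemma sgn_mul_self (j : Fin n) (I : Finset (Fin n)) : sgn n j I * sgn n j I = 1 := by
  simp [sgn, ← mul_pow]

lemma sgn_insert (hk : k ∉ I) (j : Fin n) :
    sgn n j (insert k I) = (if k < j then -1 else 1) * sgn n j I := by
  rw [sgn, sgn, Finset.filter_insert]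
  split_ifs
  · rw [Finset.card_insert_of_notMem (by simp [hk]), pow_succ']
  · rw [one_mul]

lemma sgn_mul_sgn_insert_anticomm (hj : j ∉ I) (hk : k ∉ I) (hjk : j ≠ k) :
    sgn n j I * sgn n k (insert j I) = -(sgn n k I * sgn n j (insert k I)) := by
  rw [sgn_insert hj, sgn_insert hk]
  rcases hjk.lt_or_gt with h | h <;> simp [h, h.not_gt, mul_comm]

lemma sgn_insert_mul_sgn_insert (hj : j ∉ I) (hk : k ∉ I) (hjk : j ≠ k) :
    sgn n k (insert j I) * sgn n j (insert k I) = -(sgn n j I * sgn n k I) := by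
  rw [sgn_insert hj, sgn_insert hk]
  rcases hjk.lt_or_gt with h | h <;> simp [h, h.not_gt, mul_comm]

end Antisymmetry

section Homotopy

variable {n : ℕ} {S : Set (Pt n)} {ω : Coeff n} {p : Pt n}

lemma Pd_apply (ω : Coeff n) (J : Finset (Fin n)) (p : Pt n) :
    Pd n ω J p = ∑ j ∈ Jᶜ, sgn n j J *
      rayIntegral (n - (J.card + 1)) (pd n j (ω (insert j J))) p := by
  simp only [Pd, rayIntegral, diagContraction_apply, Complex.coe_smul]

lemma resd_apply (ω : Coeff n) (J : Finset (Fin n)) (p : Pt n) :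
    resd n ω J p = 0 ^ (n - J.card) * ω J (p.2, p.2) := by
  rw [resd]
  split_ifs with hJ
  · simp [hJ]
  · have card_lt : J.card < n := by simpa using (Finset.card_lt_iff_ne_univ J).2 hJ
    rw [zero_pow (Nat.sub_ne_zero_of_lt card_lt), zero_mul]

lemma pd_Pd (hS : IsOpen S) (hstar : DiagStarShaped S) (hω : ∀ I, DifferentiableOn ℂ (ω I) S)
    (hp : p ∈ S) (k : Fin n) (J : Finset (Fin n)) :
    pd n k (Pd n ω J) p = ∑ j ∈ Jᶜ, sgn n j J *
      rayIntegral (n - (J.card + 1) + 1) (pd n k (pd n j (ω (insert j J)))) p := by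
  have hpd (j : Fin n) : DifferentiableOn ℂ (pd n j (ω (insert j J))) S :=
    differentiableOn_pd hS (hω _) j
  rw [funext (Pd_apply ω J), pd_sum_const_mul fun j _ =>
    (differentiableOn_rayIntegral hS hstar (hpd j) _).differentiableAt (hS.mem_nhds hp)]
  simp only [pd_rayIntegral hS hstar (hpd _) _ hp]

lemma Pd_Pd_apply (hS : IsOpen S) (hstar : DiagStarShaped S)
    (hω : ∀ I, DifferentiableOn ℂ (ω I) S) (hp : p ∈ S) (J : Finset (Fin n)) :
    Pd n (Pd n ω) J p = ∑ k ∈ Jᶜ, ∑ j ∈ Jᶜ.erase k, sgn n k J * sgn n j (insert k J) *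
      rayIntegral (n - (J.card + 1)) (rayIntegral (n - (J.card + 1 + 1) + 1)
        (pd n k (pd n j (ω (insert j (insert k J)))))) p := by
  rw [Pd_apply]
  refine Finset.sum_congr rfl fun k hk => ?_
  have pd_eq : EqOn (pd n k (Pd n ω (insert k J))) _ S := fun x hx =>
    pd_Pd hS hstar hω hx k (insert k J)
  have inner_cont (j : Fin n) (I : Finset (Fin n)) (m : ℕ) :
      ContinuousOn (rayIntegral m (pd n k (pd n j (ω I)))) S :=
    (differentiableOn_rayIntegral hS hstar
      (differentiableOn_pd hS (differentiableOn_pd hS (hω I) j) k) m).continuousOn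
  rw [rayIntegral_congr hstar pd_eq _ hp,
    rayIntegral_sum_const_mul hstar _ _ (fun j _ => inner_cont j _ _) _ hp,
    Finset.card_insert_of_notMem (Finset.mem_compl.1 hk), Finset.compl_insert, Finset.mul_sum]
  simp only [mul_assoc]

lemma Pd_Pd_eq_zero (hS : IsOpen S) (hstar : DiagStarShaped S)
    (hω : ∀ I, DifferentiableOn ℂ (ω I) S) (hp : p ∈ S) (J : Finset (Fin n)) :
    Pd n (Pd n ω) J p = 0 := by
  rw [Pd_Pd_apply hS hstar hω hp]
  refine sum_sum_erase_eq_zero_of_antisymm fun k hk j hj hkj => ?_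
  have pd_swap (m : ℕ) : EqOn (rayIntegral m (pd n k (pd n j (ω (insert j (insert k J))))))
      (rayIntegral m (pd n j (pd n k (ω (insert k (insert j J)))))) S := fun x hx =>
    rayIntegral_congr hstar
      (fun y hy => by rw [Finset.insert_comm, pd_comm hS (hω _) hy]) m hx
  rw [rayIntegral_congr hstar (pd_swap _) _ hp, ← add_mul,
    sgn_mul_sgn_insert_anticomm (Finset.mem_compl.1 hk) (Finset.mem_compl.1 hj) hkj,
    neg_add_cancel, zero_mul]

/-- The part of `d_Ǩ(P̌ ω)` whose `ě^J`-coefficient involves the coefficients `ω I` with `I ≠ J`,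
namely `I = (J \ {j}) ∪ {k}` for `j ∈ J` and `k ∉ J`. It occurs in `P̌(d_Ǩ ω)` with the opposite
sign. -/
noncomputable def crossTerm (n : ℕ) (ω : Coeff n) : Coeff n := fun J p =>
  ∑ j ∈ J, ∑ k ∈ Jᶜ, sgn n j (J.erase j) * sgn n k (J.erase j) *
    ((p.1 j - p.2 j) * rayIntegral (n - J.card) (pd n k (ω (insert k (J.erase j)))) p)

lemma dKd_Pd_apply (ω : Coeff n) (J : Finset (Fin n)) (p : Pt n) :
    dKd n (Pd n ω) J p =
      ∑ j ∈ J, (p.1 j - p.2 j) * rayIntegral (n - J.card) (pd n j (ω J)) p +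
        crossTerm n ω J p := by
  rw [dKd, crossTerm, ← Finset.sum_add_distrib]
  refine Finset.sum_congr rfl fun j hj => ?_
  rw [Pd_apply, Finset.card_erase_add_one hj, Finset.compl_erase,
    Finset.sum_insert (Finset.notMem_compl.2 hj), Finset.insert_erase hj, mul_add, mul_add,
    Finset.mul_sum, Finset.mul_sum]
  congr 1
  · linear_combination ((p.1 j - p.2 j) * rayIntegral (n - J.card) (pd n j (ω J)) p) *
      sgn_mul_self j (J.erase j)
  · exact Finset.sum_congr rfl fun k _ => by ring

lemma rayIntegral_pd_dKd (hS : IsOpen S) (hstar : DiagStarShaped S)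
    (hω : ∀ I, DifferentiableOn ℂ (ω I) S) (hp : p ∈ S) (m : ℕ) (k : Fin n)
    (J : Finset (Fin n)) :
    rayIntegral m (pd n k (dKd n ω J)) p = ∑ j ∈ J, sgn n j (J.erase j) *
      ((if j = k then rayIntegral m (ω (J.erase j)) p else 0) +
        (p.1 j - p.2 j) * rayIntegral (m + 1) (pd n k (ω (J.erase j))) p) := by
  have coord_mul_diff (j : Fin n) (I : Finset (Fin n)) :
      DifferentiableOn ℂ (fun x : Pt n => (x.1 j - x.2 j) * ω I x) S :=
    DifferentiableOn.mul (by fun_prop) (hω I)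
  have pd_eq : EqOn (pd n k (dKd n ω J)) _ S := fun x hx =>
    pd_sum_const_mul (fun j _ => (coord_mul_diff j (J.erase j)).differentiableAt
      (hS.mem_nhds hx)) (fun j => sgn n j (J.erase j)) k
  rw [rayIntegral_congr hstar pd_eq m hp, rayIntegral_sum_const_mul hstar _ _
    (fun j _ => (differentiableOn_pd hS (coord_mul_diff j _) k).continuousOn) m hp]
  simp only [rayIntegral_pd_coord_mul hS hstar (hω _) m hp]

lemma Pd_dKd_apply (hS : IsOpen S) (hstar : DiagStarShaped S)
    (hω : ∀ I, DifferentiableOn ℂ (ω I) S) (hp : p ∈ S) (J : Finset (Fin n)) :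
    Pd n (dKd n ω) J p =
      ∑ k ∈ Jᶜ, (rayIntegral (n - J.card - 1) (ω J) p +
        (p.1 k - p.2 k) * rayIntegral (n - J.card) (pd n k (ω J)) p) - crossTerm n ω J p := by
  rw [Pd_apply, crossTerm, Finset.sum_comm, ← Finset.sum_sub_distrib]
  refine Finset.sum_congr rfl fun k hk => ?_
  have hkJ : k ∉ J := Finset.mem_compl.1 hk
  have card_lt : J.card < n := by simpa using Finset.card_lt_univ_of_notMem hkJ
  rw [rayIntegral_pd_dKd hS hstar hω hp, Finset.sum_insert hkJ, Finset.erase_insert hkJ,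
    if_pos rfl, ← Nat.sub_sub, Nat.sub_add_cancel (Nat.sub_pos_of_lt card_lt), mul_add,
    sub_eq_add_neg (_ + _), ← Finset.sum_neg_distrib, Finset.mul_sum, ← mul_assoc,
    sgn_mul_self, one_mul]
  congr 1
  refine Finset.sum_congr rfl fun j hj => ?_
  have hjk : j ≠ k := ne_of_mem_of_not_mem hj hkJ
  have sign := sgn_insert_mul_sgn_insert (J.notMem_erase j)
    (fun hk' => hkJ (Finset.mem_of_mem_erase hk')) hjk
  rw [Finset.insert_erase hj] at sign
  rw [if_neg hjk, zero_add, Finset.erase_insert_of_ne hjk.symm, ← mul_assoc, sign, neg_mul]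

lemma dKd_Pd_add_Pd_dKd (hS : IsOpen S) (hstar : DiagStarShaped S)
    (hω : ∀ I, DifferentiableOn ℂ (ω I) S) (hp : p ∈ S) (J : Finset (Fin n)) :
    dKd n (Pd n ω) J p + Pd n (dKd n ω) J p = ω J p - resd n ω J p := by
  rw [dKd_Pd_apply, Pd_dKd_apply hS hstar hω hp, resd_apply,
    ← sum_coord_mul_rayIntegral_pd hS hstar (hω J) _ hp, ← Finset.sum_add_sum_compl J,
    Finset.sum_add_distrib, Finset.sum_const, Finset.card_compl, Fintype.card_fin, nsmul_eq_mul]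
  ring

end Homotopy

theorem statement10_general {n : ℕ} {S : Set (Pt n)} (hS : IsOpen S) (hstar : DiagStarShaped S)
    {ω : Coeff n} (hω : ∀ I, DifferentiableOn ℂ (ω I) S) :
    (∀ J : Finset (Fin n), ∀ p ∈ S,
        dKd n (Pd n ω) J p + Pd n (dKd n ω) J p = ω J p - resd n ω J p) ∧
    (∀ J : Finset (Fin n), ∀ p ∈ S, Pd n (Pd n ω) J p = 0) :=
  ⟨fun J _ hp => dKd_Pd_add_Pd_dKd hS hstar hω hp J, fun J _ hp => Pd_Pd_eq_zero hS hstar hω hp J⟩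

/-- For every `0 ≤ q ≤ n` and `ω ∈ Ǩ^q`,
`d_Ǩ(P̌ ω) + P̌(d_Ǩ ω) = ω - reš(ω)` on `U × U`, and moreover `P̌ ∘ P̌ = 0`. -/
theorem statement10 (n : ℕ) (hn : 1 ≤ n)
    (U : Set (Fin n → ℂ)) (hUopen : IsOpen U) (hUconv : Convex ℝ U)
    (hUne : U.Nonempty)
    (q : ℕ) (hq : q ≤ n) (ω : Coeff n) (hω : MemK n U q ω) :
    (∀ J : Finset (Fin n), ∀ p ∈ U ×ˢ U,
        dKd n (Pd n ω) J p + Pd n (dKd n ω) J p = ω J p - resd n ω J p) ∧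
    (∀ J : Finset (Fin n), ∀ p ∈ U ×ˢ U, Pd n (Pd n ω) J p = 0) :=
  statement10_general (hUopen.prod hUopen) (diagStarShaped_prod_self hUconv) hω.2

end TwistedKoszulDual
end

section
/- For each 0 ≤ m ≤ n, the homology of the total complex (T^•, d_⊗) in degree −m is isomorphic to Λ^m(ℂⁿ) ⊗_ℂ O(U) (the holomorphic m-forms on U, via e^I ↦ dz^I), the isomorphism being induced by sending a cycle to the restriction to the diagonal ζ = z of its component in K^{−m} ⊗ K^0 ≅ K^{−m}; and the homology of (T^•, d_⊗) in degree −m vanishes for m > n. -/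
/-!
Setting: `n ≥ 1`, `U ⊆ ℂⁿ` a nonempty convex open set.  Points of `U × U` are
written `p = (z, ζ)` with `z = p.1`, `ζ = p.2`.  For `0 ≤ q ≤ n`,
`K^{-q} = Λ^q(ℂⁿ) ⊗ O(U×U)` is encoded by the coefficients of its elements on
the basis `e^I`, where the strictly increasing multi-indices
`I = (i₁ < … < i_q)` are encoded as finsets `I ⊆ Fin n` of cardinality `q`.
-/

open scoped BigOperators

namespace TwistedKoszul

variable (n : ℕ)

/-- Points of `ℂⁿ × ℂⁿ`. -/
abbrev Pt (n : ℕ) := (Fin n → ℂ) × (Fin n → ℂ)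

/-- A family of coefficients, indexed by the basis vectors `e^I` of the
exterior algebra `Λ^•(ℂⁿ)` (strictly increasing multi-indices `I`, encoded as
finsets).  An element of `K^{-q}` is such a family supported on finsets of
cardinality `q`, with holomorphic coefficients (see `MemK`). -/
abbrev Coeff (n : ℕ) := Finset (Fin n) → Pt n → ℂ

/-- The sign `(-1)^{#{i ∈ I | i < j}}`, so that `e^j ∧ e^I = sgn j I • e^{I ∪ {j}}`
for `j ∉ I`. -/
noncomputable def sgn (j : Fin n) (I : Finset (Fin n)) : ℂ :=
  (-1 : ℂ) ^ (I.filter (fun i => i < j)).card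

/-- The holomorphic partial derivative `∂f/∂z^j` in the `j`-th coordinate of
the first factor. -/
noncomputable def pd (j : Fin n) (f : Pt n → ℂ) (p : Pt n) : ℂ :=
  fderiv ℂ f p (Pi.single j 1, 0)

/-- The Koszul differential `d_K : K^{-q} → K^{-q+1}`: contraction with
`Σ_i (z^i - ζ^i) ě^i`, i.e. `d_K(f e^I) = Σ_r (-1)^{r-1} (z^{i_r} - ζ^{i_r}) f e^{I_r}`. -/
noncomputable def dK (ω : Coeff n) : Coeff n := fun J p =>
  ∑ j ∈ Jᶜ, sgn n j J * ((p.1 j - p.2 j) * ω (insert j J) p)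

/-- The homotopy operator `P : K^{-q} → K^{-q-1}`:
`P(f e^I) = Σ_j (∫₀¹ t^{|I|} (∂f/∂z^j)(ζ + t(z - ζ), ζ) dt) e^j ∧ e^I`. -/
noncomputable def P (ω : Coeff n) : Coeff n := fun J p =>
  ∑ j ∈ J, sgn n j (J.erase j) *
    ∫ t in (0:ℝ)..1, (t : ℂ) ^ (J.card - 1) *
      pd n j (ω (J.erase j)) (p.2 + t • (p.1 - p.2), p.2)

/-- The operator `res`: zero on `K^{-q}` for `q ≥ 1`, and
`res(f)(z, ζ) = f(ζ, ζ)` for `f ∈ K^0`. -/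
noncomputable def res (ω : Coeff n) : Coeff n := fun J p =>
  if J = ∅ then ω ∅ (p.2, p.2) else 0

/-- The element of `K^0 = O(U×U)` determined by a single function. -/
noncomputable def ofFun (f : Pt n → ℂ) : Coeff n := fun J p => if J = ∅ then f p else 0

/-- `ω` is an element of `K^{-q}` over `U × U`: it is supported on
multi-indices of length `q` and its coefficients are holomorphic on `U × U`. -/
noncomputable def MemK (U : Set (Fin n → ℂ)) (q : ℕ) (ω : Coeff n) : Prop :=
  (∀ I : Finset (Fin n), I.card ≠ q → ω I = 0) ∧
  ∀ I : Finset (Fin n), DifferentiableOn ℂ (ω I) (U ×ˢ U)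

end TwistedKoszul

namespace TwistedKoszul

variable (n : ℕ)

/-- A family of coefficients for the tensor-product complex
`T^{-m} = ⊕_{i+j=m} K^{-i} ⊗_{O(U×U)} K^{-j}`, indexed by the basis vectors
`e^I ⊗ e^J`.  An element of `T^{-m}` is such a family supported on pairs with
`|I| + |J| = m`, with holomorphic coefficients (see `MemT`). -/
abbrev Coeff2 (n : ℕ) := Finset (Fin n) → Finset (Fin n) → Pt n → ℂ

/-- The differential `d_⊗(η ⊗ ξ) = d_K η ⊗ ξ + (-1)^i η ⊗ d_K ξ` for
`η ∈ K^{-i}`, `ξ ∈ K^{-j}`, in coefficients. -/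
noncomputable def dT (c : Coeff2 n) : Coeff2 n := fun I J p =>
  (∑ j ∈ Iᶜ, sgn n j I * ((p.1 j - p.2 j) * c (insert j I) J p)) +
    (-1 : ℂ) ^ I.card *
      ∑ j ∈ Jᶜ, sgn n j J * ((p.1 j - p.2 j) * c I (insert j J) p)

/-- `c` is an element of `T^{-m}` over `U × U`: it is supported on pairs of
multi-indices of total length `m` and its coefficients are holomorphic. -/
def MemT (U : Set (Fin n → ℂ)) (m : ℕ) (c : Coeff2 n) : Prop :=
  (∀ I J : Finset (Fin n), I.card + J.card ≠ m → c I J = 0) ∧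
  ∀ I J : Finset (Fin n), DifferentiableOn ℂ (c I J) (U ×ˢ U)

/-!
Identify `e^k` with `dz^k`. On the segment from `(ζ, ζ)` to `(z, ζ)`, Cartan's formula turns the
integrand of `d_K P ω + P d_K ω` into the `t`-derivative of `t ^ |J| * ω_J (ζ + t (z - ζ), ζ)`, so
that `d_K P + P d_K = id - res`. Now let `c` be a cycle of `T` whose component in `K^{-m} ⊗ K^0`
vanishes on the diagonal. Applying `P` to the second tensor factor yields an element whose boundary
agrees with `c` in the lowest degree of that factor in which `c` does not vanish; subtracting it and
repeating exhausts `c`, which is therefore a boundary. Conversely boundaries vanish on the diagonal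
because the coefficients `z^i - ζ^i` do, and `∑_I g_I(z) ∏_{i ∈ I} (e^i ⊗ 1 - 1 ⊗ e^i)` is a cycle
restricting to `∑_I g_I dz^I`.
-/

section ParametricHolomorphy

open Set Metric Filter Topology MeasureTheory Function

variable {H E : Type*} [NormedAddCommGroup H] [NormedSpace ℂ H]
  [NormedAddCommGroup E] [NormedSpace ℂ E] {W : Set H}

theorem norm_fderiv_le_of_forall_mem_ball_norm_le {f : H → E} {c : H} {R M : ℝ} (hR : 0 < R)
    (hf : DifferentiableOn ℂ f (ball c R)) (hM : ∀ z ∈ ball c R, ‖f z‖ ≤ M) :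
    ‖fderiv ℂ f c‖ ≤ 2 * M / R := by
  refine Complex.norm_fderiv_le_div_of_mapsTo_ball hf (fun z hz ↦ ?_) hR
  rw [mem_closedBall, dist_eq_norm]
  linarith [norm_sub_le (f z) (f c), hM z hz, hM c (mem_ball_self hR)]

theorem fderiv_apply_eq_circleIntegral [CompleteSpace E] {f : H → E} {x v : H} {r : ℝ}
    (hr : 0 < r) (hf : ∀ s ∈ closedBall (0 : ℂ) r, DifferentiableAt ℂ f (x + s • v)) :
    fderiv ℂ f x v =
      (2 * Real.pi * Complex.I : ℂ)⁻¹ • ∮ s in C(0, r), (s ^ 2)⁻¹ • f (x + s • v) := by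
  have hline : DifferentiableOn ℂ (fun s : ℂ ↦ f (x + s • v)) (closedBall 0 r) := fun s hs ↦
    ((hf s hs).comp s (by fun_prop)).differentiableWithinAt
  have hfx : DifferentiableAt ℂ f x := by simpa using hf 0 (by simpa using hr.le)
  have hcauchy := hline.deriv_eq_smul_circleIntegral hr
  simp only [sub_zero, one_div] at hcauchy
  rw [hcauchy, inv_smul_smul₀ Complex.two_pi_I_ne_zero]
  exact hfx.lineDeriv_eq_fderiv.symm

variable [ProperSpace H]

theorem continuousOn_fderiv_of_continuousOn_uncurry {T : Type*} [TopologicalSpace T]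
    (hW : IsOpen W) {S : Set T} {F : H → T → E} (hF : ContinuousOn (uncurry F) (W ×ˢ S))
    (hd : ∀ t ∈ S, DifferentiableOn ℂ (F · t) W) {x : H} (hx : x ∈ W) :
    ContinuousOn (fun t ↦ fderiv ℂ (F · t) x) S := by
  obtain ⟨r, hr, hrW⟩ := nhds_basis_closedBall.mem_iff.1 (hW.mem_nhds hx)
  have hF' : ContinuousOn (uncurry fun t x ↦ F x t) (S ×ˢ closedBall x r) :=
    hF.comp continuous_swap.continuousOn fun q hq ↦ ⟨hrW hq.2, hq.1⟩
  refine Metric.continuousOn_iff'.2 fun t ht ε hε ↦ ?_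
  obtain ⟨V, hV, hclose⟩ := (isCompact_closedBall x r).mem_uniformity_of_prod hF' ht
    (dist_mem_uniformity (show 0 < ε * r / 4 by positivity))
  filter_upwards [hV, self_mem_nhdsWithin] with s hsV hs
  have hball : ball x r ⊆ W := ball_subset_closedBall.trans hrW
  rw [dist_eq_norm, ← fderiv_fun_sub ((hd s hs).differentiableAt (hW.mem_nhds hx))
    ((hd t ht).differentiableAt (hW.mem_nhds hx))]
  calc ‖fderiv ℂ (fun y ↦ F y s - F y t) x‖
      ≤ 2 * (ε * r / 4) / r :=
        norm_fderiv_le_of_forall_mem_ball_norm_le hr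
          (((hd s hs).mono hball).sub ((hd t ht).mono hball)) fun y hy ↦ by
            rw [← dist_eq_norm]
            exact le_of_lt (hclose s hsV y (ball_subset_closedBall hy))
    _ = ε / 2 := by field_simp; norm_num
    _ < ε := half_lt_self hε

theorem exists_bound_fderiv_of_continuousOn_uncurry {T : Type*} [TopologicalSpace T]
    (hW : IsOpen W) {S : Set T} (hS : IsCompact S) {F : H → T → E}
    (hF : ContinuousOn (uncurry F) (W ×ˢ S))
    (hd : ∀ t ∈ S, DifferentiableOn ℂ (F · t) W) {x : H} (hx : x ∈ W) :
    ∃ V ∈ 𝓝 x, V ⊆ W ∧ ∃ C, ∀ t ∈ S, ∀ y ∈ V, ‖fderiv ℂ (F · t) y‖ ≤ C := by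
  obtain ⟨R, hR, hRW⟩ := nhds_basis_closedBall.mem_iff.1 (hW.mem_nhds hx)
  obtain ⟨M, hM⟩ := ((isCompact_closedBall x R).prod hS).exists_bound_of_continuousOn
    (hF.mono (prod_mono hRW subset_rfl))
  refine ⟨ball x (R / 2), ball_mem_nhds x (half_pos hR), ?_, 2 * M / (R / 2),
    fun t ht y hy ↦ ?_⟩
  · exact (ball_subset_closedBall.trans (closedBall_subset_closedBall (half_le_self hR.le))).trans
      hRW
  · have hyR : ball y (R / 2) ⊆ closedBall x R :=
      (ball_subset_ball' (by linarith [mem_ball.1 hy])).trans ball_subset_closedBall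
    exact norm_fderiv_le_of_forall_mem_ball_norm_le (half_pos hR)
      ((hd t ht).mono (hyR.trans hRW)) fun z hz ↦ hM (z, t) ⟨hyR hz, ht⟩

theorem differentiableOn_intervalIntegral (hW : IsOpen W) {a b : ℝ} {F : H → ℝ → E}
    (hF : ContinuousOn (uncurry F) (W ×ˢ uIcc a b))
    (hd : ∀ t ∈ uIcc a b, DifferentiableOn ℂ (F · t) W) :
    DifferentiableOn ℂ (fun x ↦ ∫ t in a..b, F x t) W := by
  intro x hx
  obtain ⟨V, hV, hVW, C, hC⟩ :=
    exists_bound_fderiv_of_continuousOn_uncurry hW isCompact_uIcc hF hd hx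
  have hslice : ∀ y ∈ W, ContinuousOn (F y) (uIcc a b) := fun y hy ↦
    hF.comp (f := fun t : ℝ ↦ (y, t)) (by fun_prop) fun t ht ↦ ⟨hy, ht⟩
  refine (intervalIntegral.hasFDerivAt_integral_of_dominated_of_fderiv_le (𝕜 := ℂ)
    (F' := fun y t ↦ fderiv ℂ (F · t) y) (bound := fun _ ↦ C) hV ?_
    (hslice x hx).intervalIntegrable ?_ ?_ intervalIntegrable_const
    ?_).differentiableAt.differentiableWithinAt
  · filter_upwards [hW.mem_nhds hx] with y hy
    exact ((hslice y hy).mono uIoc_subset_uIcc).aestronglyMeasurable measurableSet_uIoc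
  · exact ((continuousOn_fderiv_of_continuousOn_uncurry hW hF hd hx).mono
      uIoc_subset_uIcc).aestronglyMeasurable measurableSet_uIoc
  · exact .of_forall fun t ht ↦ hC t (uIoc_subset_uIcc ht)
  · exact .of_forall fun t ht y hy ↦ ((hd t (uIoc_subset_uIcc ht)).differentiableAt
      (hW.mem_nhds (hVW hy))).hasFDerivAt

theorem differentiableOn_circleIntegral (hW : IsOpen W) {c : ℂ} {r : ℝ} (hr : 0 ≤ r)
    {F : H → ℂ → E} (hF : ContinuousOn (uncurry F) (W ×ˢ sphere c r))
    (hd : ∀ s ∈ sphere c r, DifferentiableOn ℂ (F · s) W) :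
    DifferentiableOn ℂ (fun x ↦ ∮ s in C(c, r), F x s) W := by
  have hmem : ∀ θ, circleMap c r θ ∈ sphere c r := circleMap_mem_sphere c hr
  refine differentiableOn_intervalIntegral hW (ContinuousOn.smul ?_ ?_) fun θ _ ↦
    (hd _ (hmem θ)).const_smul _
  · simp only [deriv_circleMap]
    fun_prop
  · exact hF.comp (f := fun q : H × ℝ ↦ (q.1, circleMap c r q.2)) (by fun_prop)
      fun q hq ↦ ⟨hq.1, hmem q.2⟩

theorem differentiableOn_fderiv_apply [CompleteSpace E] (hW : IsOpen W) {f : H → E}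
    (hf : DifferentiableOn ℂ f W) (v : H) : DifferentiableOn ℂ (fun x ↦ fderiv ℂ f x v) W := by
  intro x₀ hx₀
  have hshift : (fun q : H × ℂ ↦ q.1 + q.2 • v) ⁻¹' W ∈ 𝓝 (x₀, (0 : ℂ)) :=
    (show Continuous fun q : H × ℂ ↦ q.1 + q.2 • v by fun_prop).continuousAt.preimage_mem_nhds
      (hW.mem_nhds (by simpa using hx₀))
  obtain ⟨V, D, hV, hx₀V, hD, h0D, hVD⟩ := mem_nhds_prod_iff'.1 hshift
  obtain ⟨r, hr, hrD⟩ := nhds_basis_closedBall.mem_iff.1 (hD.mem_nhds h0D)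
  have hmem : ∀ x ∈ V, ∀ s ∈ closedBall (0 : ℂ) r, x + s • v ∈ W :=
    fun x hx s hs ↦ hVD (mk_mem_prod hx (hrD hs))
  have hcauchy : ∀ x ∈ V, fderiv ℂ f x v =
      (2 * Real.pi * Complex.I : ℂ)⁻¹ • ∮ s in C(0, r), (s ^ 2)⁻¹ • f (x + s • v) :=
    fun x hx ↦ fderiv_apply_eq_circleIntegral hr fun s hs ↦
      hf.differentiableAt (hW.mem_nhds (hmem x hx s hs))
  have hint : DifferentiableOn ℂ
      (fun x ↦ ∮ s in C(0, r), (s ^ 2)⁻¹ • f (x + s • v)) V := by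
    refine differentiableOn_circleIntegral hV hr.le (ContinuousOn.smul ?_ ?_) fun s hs ↦
      (hf.comp (by fun_prop) fun x hx ↦ hmem x hx s (sphere_subset_closedBall hs)).const_smul _
    · exact ContinuousOn.inv₀ (by fun_prop) fun q hq ↦ by
        simpa using ne_of_mem_sphere hq.2 hr.ne'
    · exact hf.continuousOn.comp (by fun_prop) fun q hq ↦
        hmem q.1 hq.1 q.2 (sphere_subset_closedBall hq.2)
  exact (((hint.const_smul _).congr hcauchy).differentiableAt
    (hV.mem_nhds hx₀V)).differentiableWithinAt

end ParametricHolomorphy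

variable {n}

section ExteriorAlgebra

/-- The exterior algebra `Λ^•(ℂⁿ)`, its elements being given by their coefficients on the basis
`e^I`. -/
abbrev Ext (n : ℕ) := Finset (Fin n) → ℂ

/-- The contraction with the dual basis vector `ě^j`. -/
noncomputable def interior (j : Fin n) : Ext n →ₗ[ℂ] Ext n where
  toFun w J := if j ∈ J then 0 else sgn n j J * w (insert j J)
  map_add' v w := by ext J; split_ifs <;> simp [*, mul_add]
  map_smul' a w := by ext J; split_ifs <;> simp [*, mul_left_comm]

/-- The left multiplication by the basis vector `e^k`. -/
noncomputable def exterior (k : Fin n) : Ext n →ₗ[ℂ] Ext n where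
  toFun w J := if k ∈ J then sgn n k (J.erase k) * w (J.erase k) else 0
  map_add' v w := by ext J; split_ifs <;> simp [*, mul_add]
  map_smul' a w := by ext J; split_ifs <;> simp [*, mul_left_comm]

/-- The contraction with the covector `∑ j, x j • ě^j`. -/
noncomputable def contract (x : Fin n → ℂ) : Ext n →ₗ[ℂ] Ext n := ∑ j, x j • interior j

theorem interior_apply (j : Fin n) (w : Ext n) (J : Finset (Fin n)) :
    interior j w J = if j ∈ J then 0 else sgn n j J * w (insert j J) := rfl

theorem exterior_apply (k : Fin n) (w : Ext n) (J : Finset (Fin n)) :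
    exterior k w J = if k ∈ J then sgn n k (J.erase k) * w (J.erase k) else 0 := rfl

theorem contract_eq_sum (x : Fin n → ℂ) (w : Ext n) :
    contract x w = ∑ j, x j • interior j w := by
  simp [contract]

theorem contract_apply_eq_sum (x : Fin n → ℂ) (w : Ext n) (J : Finset (Fin n)) :
    contract x w J = ∑ j, x j * interior j w J := by
  simp [contract_eq_sum]

theorem contract_apply (x : Fin n → ℂ) (w : Ext n) (J : Finset (Fin n)) :
    contract x w J = ∑ j ∈ Jᶜ, sgn n j J * (x j * w (insert j J)) := by
  rw [contract_apply_eq_sum]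
  refine (Finset.sum_subset_zero_on_sdiff (Finset.subset_univ Jᶜ) (fun j hj ↦ ?_)
    fun j hj ↦ ?_).symm
  · simp_all [interior_apply]
  · simp_all [interior_apply, mul_left_comm]

theorem contract_single (k : Fin n) : contract (Pi.single k 1) = interior k := by
  simp [contract, Pi.single_apply]

theorem contract_smul_left (a : ℂ) (x : Fin n → ℂ) : contract (a • x) = a • contract x := by
  simp [contract, Finset.smul_sum, smul_smul]

theorem sgn_mul_self (j : Fin n) (I : Finset (Fin n)) : sgn n j I * sgn n j I = 1 := by
  rw [sgn, ← mul_pow]; simp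

theorem sgn_insert (j : Fin n) {k : Fin n} {A : Finset (Fin n)} (hk : k ∉ A) :
    sgn n j (insert k A) = (if k < j then -1 else 1) * sgn n j A := by
  unfold sgn
  rw [Finset.filter_insert]
  split_ifs with h
  · rw [Finset.card_insert_of_notMem (by simp [hk]), pow_succ']
  · simp

theorem sgn_mul_sgn_insert {j k : Fin n} {A : Finset (Fin n)} (hjk : j ≠ k) (hj : j ∉ A)
    (hk : k ∉ A) :
    sgn n j A * sgn n k (insert j A) = -(sgn n k A * sgn n j (insert k A)) := by
  rw [sgn_insert j hk, sgn_insert k hj]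
  rcases hjk.lt_or_gt with h | h <;> simp [h, h.not_gt, mul_comm]

theorem sgn_insert_mul_sgn_insert {j k : Fin n} {A : Finset (Fin n)} (hjk : j ≠ k) (hj : j ∉ A)
    (hk : k ∉ A) :
    sgn n j (insert k A) * sgn n k (insert j A) = -(sgn n k A * sgn n j A) := by
  rw [sgn_insert j hk, sgn_insert k hj]
  rcases hjk.lt_or_gt with h | h <;> simp [h, h.not_gt, mul_comm]

theorem interior_interior (j k : Fin n) (w : Ext n) :
    interior j (interior k w) = -interior k (interior j w) := by
  ext J
  by_cases hj : j ∈ J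
  · simp [interior_apply, hj]
  by_cases hk : k ∈ J
  · simp [interior_apply, hk]
  obtain rfl | hjk := eq_or_ne j k
  · simp [interior_apply]
  · simp [interior_apply, hj, hk, hjk, hjk.symm, Finset.insert_comm k j, ← mul_assoc,
      sgn_mul_sgn_insert hjk hj hk]

theorem interior_exterior_self (k : Fin n) (w : Ext n) :
    interior k (exterior k w) = w - exterior k (interior k w) := by
  ext J
  by_cases hk : k ∈ J
  · simp [interior_apply, exterior_apply, hk, ← mul_assoc, sgn_mul_self]
  · simp [interior_apply, exterior_apply, hk, ← mul_assoc, sgn_mul_self]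

theorem interior_exterior_of_ne {j k : Fin n} (hjk : j ≠ k) (w : Ext n) :
    interior j (exterior k w) = -exterior k (interior j w) := by
  ext J
  by_cases hj : j ∈ J
  · simp [interior_apply, exterior_apply, hj, hjk]
  by_cases hk : k ∈ J
  · obtain ⟨A, hkA, rfl⟩ : ∃ A, k ∉ A ∧ insert k A = J :=
      ⟨J.erase k, Finset.notMem_erase k J, Finset.insert_erase hk⟩
    have hjA : j ∉ A := fun h ↦ hj (Finset.mem_insert_of_mem h)
    have herase : (insert j (insert k A)).erase k = insert j A := by
      rw [Finset.insert_comm, Finset.erase_insert (by simp [hkA, hjk.symm])]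
    simp [interior_apply, exterior_apply, hjA, hkA, hjk, herase, ← mul_assoc,
      sgn_insert_mul_sgn_insert hjk hjA hkA]
  · simp [interior_apply, exterior_apply, hj, hk, hjk.symm]

theorem sum_exterior_interior (w : Ext n) (J : Finset (Fin n)) :
    ∑ k, exterior k (interior k w) J = J.card * w J := by
  have hterm : ∀ k, exterior k (interior k w) J = if k ∈ J then w J else 0 := by
    intro k
    by_cases hk : k ∈ J <;>
      simp [interior_apply, exterior_apply, hk, ← mul_assoc, sgn_mul_self]
  simp [hterm]

theorem contract_contract (x : Fin n → ℂ) (w : Ext n) : contract x (contract x w) = 0 := by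
  have hsum : contract x (contract x w) =
      ∑ j, ∑ k, x j • x k • interior j (interior k w) := by
    simp only [contract_eq_sum x, map_sum, map_smul, Finset.smul_sum]
  have hneg : contract x (contract x w) = -contract x (contract x w) :=
    calc contract x (contract x w)
        = ∑ k, ∑ j, x j • x k • interior j (interior k w) := by rw [hsum, Finset.sum_comm]
      _ = ∑ k, ∑ j, -(x k • x j • interior k (interior j w)) := by
          refine Finset.sum_congr rfl fun k _ ↦ Finset.sum_congr rfl fun j _ ↦ ?_
          rw [interior_interior j k, smul_neg, smul_neg, smul_comm]
      _ = -contract x (contract x w) := by simp only [hsum, Finset.sum_neg_distrib]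
  exact self_eq_neg.1 hneg

theorem contract_exterior (x : Fin n → ℂ) (k : Fin n) (w : Ext n) :
    contract x (exterior k w) = x k • w - exterior k (contract x w) := by
  have hterm : ∀ j, x j • interior j (exterior k w) =
      (if j = k then x k • w else 0) - exterior k (x j • interior j w) := by
    intro j
    obtain rfl | hjk := eq_or_ne j k
    · simp [interior_exterior_self, smul_sub]
    · simp [interior_exterior_of_ne hjk, hjk]
  simp [contract_eq_sum, hterm]

theorem contract_neg_one_pow_card_mul (x : Fin n → ℂ) (w : Ext n) (J : Finset (Fin n)) :
    contract x (fun I ↦ (-1) ^ I.card * w I) J = -((-1) ^ J.card * contract x w J) := by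
  rw [contract_apply, contract_apply, Finset.mul_sum, ← Finset.sum_neg_distrib]
  refine Finset.sum_congr rfl fun j hj ↦ ?_
  rw [Finset.card_insert_of_notMem (by simpa using hj)]
  ring

theorem contract_pow_card_sub_one_mul (x : Fin n → ℂ) (s : ℂ) (w : Ext n) (J : Finset (Fin n)) :
    contract x (fun I ↦ s ^ (I.card - 1) * w I) J = s ^ J.card * contract x w J := by
  rw [contract_apply, contract_apply, Finset.mul_sum]
  refine Finset.sum_congr rfl fun j hj ↦ ?_
  rw [Finset.card_insert_of_notMem (by simpa using hj), Nat.add_sub_cancel]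
  ring

theorem contract_comm (x y : Fin n → ℂ) (c : Finset (Fin n) → Ext n) (I J : Finset (Fin n)) :
    contract x (fun I' ↦ contract y (c I') J) I =
      contract y (fun J' ↦ contract x (c · J') I) J := by
  simp only [contract_apply, Finset.mul_sum]
  rw [Finset.sum_comm]
  exact Finset.sum_congr rfl fun _ _ ↦ Finset.sum_congr rfl fun _ _ ↦ by ring

end ExteriorAlgebra

section KoszulHomotopy

open Set Filter Topology MeasureTheory

variable {U : Set (Fin n → ℂ)} {ω : Coeff n}

theorem dK_eq_contract (ω : Coeff n) (J : Finset (Fin n)) (p : Pt n) :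
    dK n ω J p = contract (p.1 - p.2) (ω · p) J := by
  simp only [dK, contract_apply, Pi.sub_apply]

theorem dK_eq_zero {J : Finset (Fin n)} {p : Pt n} (h : ∀ j ∉ J, ω (insert j J) p = 0) :
    dK n ω J p = 0 :=
  Finset.sum_eq_zero fun j hj ↦ by simp [h j (by simpa using hj)]

theorem differentiableOn_dK {W : Set (Pt n)} (hω : ∀ I, DifferentiableOn ℂ (ω I) W)
    (J : Finset (Fin n)) : DifferentiableOn ℂ (dK n ω J) W := by
  have hcoord : ∀ j : Fin n, DifferentiableOn ℂ (fun p : Pt n ↦ p.1 j - p.2 j) W := by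
    intro j; fun_prop
  exact DifferentiableOn.fun_sum fun j _ ↦ ((hcoord j).fun_mul (hω _)).const_mul _

theorem pd_dK {q : Pt n} (hω : ∀ I, DifferentiableAt ℂ (ω I) q) (k : Fin n)
    (J : Finset (Fin n)) :
    pd n k (dK n ω J) q =
      interior k (ω · q) J + contract (q.1 - q.2) (fun I ↦ pd n k (ω I) q) J := by
  let coord (j : Fin n) : Pt n →L[ℂ] ℂ :=
    (ContinuousLinearMap.proj (R := ℂ) (φ := fun _ : Fin n ↦ ℂ) j).comp
      (ContinuousLinearMap.fst ℂ _ _ - ContinuousLinearMap.snd ℂ _ _)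
  have hderiv := HasFDerivAt.fun_sum (u := Jᶜ) fun j _ ↦
    ((coord j).hasFDerivAt.fun_mul (hω (insert j J)).hasFDerivAt).const_mul (sgn n j J)
  have hval := DFunLike.congr_fun hderiv.fderiv (Pi.single k 1, 0)
  have hsum : pd n k (dK n ω J) q = ∑ j ∈ Jᶜ, sgn n j J *
      ((q.1 j - q.2 j) * pd n k (ω (insert j J)) q +
        (Pi.single k 1 : Fin n → ℂ) j * ω (insert j J) q) := by
    refine hval.trans ?_
    simp [coord, pd, mul_add, mul_comm]
  simp only [hsum, mul_add, Finset.sum_add_distrib, contract_apply, Pi.sub_apply]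
  rw [add_comm, ← contract_apply (Pi.single k 1) (ω · q), contract_single]

/-- The exterior derivative `∂_z : f e^I ↦ ∑ k, (∂f/∂z^k) e^k ∧ e^I` in the first factor, under the
identification `e^k = dz^k`. -/
noncomputable def dz (ω : Coeff n) : Coeff n := fun J p ↦
  (∑ k, exterior k fun I ↦ pd n k (ω I) p) J

theorem dz_apply (ω : Coeff n) (J : Finset (Fin n)) (p : Pt n) :
    dz ω J p = ∑ k ∈ J, sgn n k (J.erase k) * pd n k (ω (J.erase k)) p := by
  simp [dz, exterior_apply]

theorem differentiableOn_dz {W : Set (Pt n)} (hW : IsOpen W)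
    (hω : ∀ I, DifferentiableOn ℂ (ω I) W) (J : Finset (Fin n)) :
    DifferentiableOn ℂ (dz ω J) W := by
  rw [show dz ω J = _ from funext (dz_apply ω J)]
  exact DifferentiableOn.fun_sum fun k _ ↦
    (differentiableOn_fderiv_apply hW (hω _) _).const_mul _

theorem fderiv_apply_fst (f : Pt n → ℂ) (q : Pt n) (v : Fin n → ℂ) :
    fderiv ℂ f q (v, 0) = ∑ k, v k * pd n k f q := by
  have hv : ((v, 0) : Pt n) = ∑ k, v k • ((Pi.single k 1, 0) : Pt n) := by
    ext i <;> simp [Prod.fst_sum, Prod.snd_sum, Finset.sum_apply, Pi.single_apply]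
  rw [hv, map_sum]
  simp only [map_smul, smul_eq_mul]
  rfl

theorem contract_dz (ω : Coeff n) (q : Pt n) (v : Fin n → ℂ) (J : Finset (Fin n)) :
    contract v (dz ω · q) J =
      fderiv ℂ (ω J) q (v, 0) - ∑ k, exterior k (contract v fun I ↦ pd n k (ω I) q) J := by
  change contract v (∑ k, exterior k fun I ↦ pd n k (ω I) q) J = _
  rw [map_sum, fderiv_apply_fst]
  simp [contract_exterior]

theorem dz_dK {q : Pt n} (hω : ∀ I, DifferentiableAt ℂ (ω I) q) (J : Finset (Fin n)) :
    dz (dK n ω) J q =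
      J.card * ω J q + ∑ k, exterior k (contract (q.1 - q.2) fun I ↦ pd n k (ω I) q) J := by
  have hpd : ∀ k, (fun I ↦ pd n k (dK n ω I) q) =
      interior k (ω · q) + contract (q.1 - q.2) fun I ↦ pd n k (ω I) q :=
    fun k ↦ funext (pd_dK hω k)
  simp [dz, hpd, Finset.sum_add_distrib, sum_exterior_interior]

/-- Cartan's formula for `∂_z` and the contraction with `v`, at a point `(z, ζ)` with
`z - ζ = s • v`. For `s = t` the right-hand side is the derivative of
`t ^ |J| * ω J (ζ + t • v, ζ)` with respect to `t`. -/
theorem cartan_formula {q : Pt n} (hω : ∀ I, DifferentiableAt ℂ (ω I) q) {v : Fin n → ℂ} {s : ℂ}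
    (hq : q.1 - q.2 = s • v) (J : Finset (Fin n)) :
    s ^ J.card * contract v (dz ω · q) J + s ^ (J.card - 1) * dz (dK n ω) J q =
      J.card * s ^ (J.card - 1) * ω J q + s ^ J.card * fderiv ℂ (ω J) q (v, 0) := by
  rw [contract_dz, dz_dK hω, hq, contract_smul_left]
  obtain rfl | hJ := J.eq_empty_or_nonempty
  · simp [exterior_apply]
  · have hpow : s ^ J.card = s ^ (J.card - 1) * s := (pow_sub_one_mul hJ.card_ne_zero s).symm
    simp only [LinearMap.smul_apply, map_smul, Pi.smul_apply, smul_eq_mul, ← Finset.mul_sum, hpow]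
    ring

/-- The point at time `t` of the segment from `(ζ, ζ)` to `p = (z, ζ)`. -/
noncomputable def fromDiagonal (p : Pt n) (t : ℝ) : Pt n := (p.2 + t • (p.1 - p.2), p.2)

theorem continuous_fromDiagonal : Continuous fun q : Pt n × ℝ ↦ fromDiagonal q.1 q.2 := by
  unfold fromDiagonal; fun_prop

theorem differentiable_fromDiagonal (t : ℝ) : Differentiable ℂ (fromDiagonal (n := n) · t) := by
  simp only [fromDiagonal, ← Complex.coe_smul]
  fun_prop

theorem hasDerivAt_fromDiagonal (p : Pt n) (t : ℝ) :
    HasDerivAt (fromDiagonal p) (p.1 - p.2, 0) t := by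
  have hfst : HasDerivAt (fun t : ℝ ↦ p.2 + t • (p.1 - p.2)) (p.1 - p.2) t := by
    simpa using ((hasDerivAt_id t).smul_const (p.1 - p.2)).const_add p.2
  exact hfst.prodMk (hasDerivAt_const t p.2)

theorem fst_sub_snd_fromDiagonal (p : Pt n) (t : ℝ) :
    (fromDiagonal p t).1 - (fromDiagonal p t).2 = (t : ℂ) • (p.1 - p.2) := by
  simp [fromDiagonal]

theorem fromDiagonal_mem (hU : Convex ℝ U) {p : Pt n} (hp : p ∈ U ×ˢ U) {t : ℝ}
    (ht : t ∈ Icc (0 : ℝ) 1) : fromDiagonal p t ∈ U ×ˢ U :=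
  ⟨hU.add_smul_sub_mem hp.2 hp.1 ht, hp.2⟩

theorem P_eq_zero {J : Finset (Fin n)} {p : Pt n}
    (h : ∀ j ∈ J, ∀ t ∈ Icc (0 : ℝ) 1, ω (J.erase j) =ᶠ[𝓝 (fromDiagonal p t)] 0) :
    P n ω J p = 0 := by
  refine Finset.sum_eq_zero fun j hj ↦ ?_
  rw [intervalIntegral.integral_zero_ae (.of_forall fun t ht ↦ ?_), mul_zero]
  have hpd : pd n j (ω (J.erase j)) (fromDiagonal p t) = 0 := by
    simp [pd, (h j hj t (by grind)).fderiv_eq]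
  change _ * pd n j (ω (J.erase j)) (fromDiagonal p t) = 0
  rw [hpd, mul_zero]

theorem P_eq_zero_of_eqOn (hUo : IsOpen U) (hU : Convex ℝ U) {J : Finset (Fin n)}
    (h : ∀ j ∈ J, ∀ q ∈ U ×ˢ U, ω (J.erase j) q = 0) {p : Pt n} (hp : p ∈ U ×ˢ U) :
    P n ω J p = 0 :=
  P_eq_zero fun j hj _ ht ↦ eventually_of_mem
    ((hUo.prod hUo).mem_nhds (fromDiagonal_mem hU hp ht)) (h j hj)

theorem intervalIntegrable_pow_mul_comp_fromDiagonal (hU : Convex ℝ U) {f : Pt n → ℂ}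
    (hf : ContinuousOn f (U ×ˢ U)) {p : Pt n} (hp : p ∈ U ×ˢ U) (k : ℕ) :
    IntervalIntegrable (fun t : ℝ ↦ (t : ℂ) ^ k * f (fromDiagonal p t)) volume 0 1 := by
  refine ContinuousOn.intervalIntegrable ?_
  rw [uIcc_of_le zero_le_one]
  have hsegment : Continuous (fromDiagonal p) :=
    continuous_fromDiagonal.comp (Continuous.prodMk_right p)
  exact ContinuousOn.mul (by fun_prop)
    (hf.comp hsegment.continuousOn fun _ ht ↦ fromDiagonal_mem hU hp ht)

theorem P_eq_intervalIntegral_dz (hUo : IsOpen U) (hU : Convex ℝ U)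
    (hω : ∀ I, DifferentiableOn ℂ (ω I) (U ×ˢ U)) (J : Finset (Fin n)) {p : Pt n}
    (hp : p ∈ U ×ˢ U) :
    P n ω J p = ∫ t in (0 : ℝ)..1, (t : ℂ) ^ (J.card - 1) * dz ω J (fromDiagonal p t) := by
  have hint : ∀ j ∈ J, IntervalIntegrable (fun t : ℝ ↦ sgn n j (J.erase j) *
      ((t : ℂ) ^ (J.card - 1) * pd n j (ω (J.erase j)) (fromDiagonal p t))) volume 0 1 :=
    fun j _ ↦ (intervalIntegrable_pow_mul_comp_fromDiagonal hU
      (differentiableOn_fderiv_apply (hUo.prod hUo) (hω _) _).continuousOn hp _).const_mul _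
  simp only [dz_apply, Finset.mul_sum, mul_left_comm _ (sgn n _ _)]
  rw [intervalIntegral.integral_finsetSum hint]
  simp only [intervalIntegral.integral_const_mul]
  rfl

theorem differentiableOn_P (hUo : IsOpen U) (hU : Convex ℝ U)
    (hω : ∀ I, DifferentiableOn ℂ (ω I) (U ×ˢ U)) (J : Finset (Fin n)) :
    DifferentiableOn ℂ (P n ω J) (U ×ˢ U) := by
  have hdz := differentiableOn_dz (hUo.prod hUo) hω J
  refine DifferentiableOn.congr ?_ fun p hp ↦ P_eq_intervalIntegral_dz hUo hU hω J hp
  refine differentiableOn_intervalIntegral (hUo.prod hUo) ?_ fun t ht ↦ ?_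
  · rw [uIcc_of_le zero_le_one]
    exact ContinuousOn.mul (by fun_prop) (hdz.continuousOn.comp
      continuous_fromDiagonal.continuousOn fun q hq ↦ fromDiagonal_mem hU hq.1 hq.2)
  · rw [uIcc_of_le zero_le_one] at ht
    exact (hdz.comp (differentiable_fromDiagonal t).differentiableOn
      fun q hq ↦ fromDiagonal_mem hU hq ht).const_mul _

theorem continuousOn_contract {X : Type*} [TopologicalSpace X] {s : Set X} {w : X → Ext n}
    (hw : ∀ I, ContinuousOn (w · I) s) (x : Fin n → ℂ) (J : Finset (Fin n)) :
    ContinuousOn (fun q ↦ contract x (w q) J) s := by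
  simp only [contract_apply]
  exact continuousOn_finsetSum _ fun j _ ↦ ((hw (insert j J)).const_mul _).const_mul _

theorem contract_intervalIntegral {w : ℝ → Ext n} {a b : ℝ}
    (hw : ∀ I, IntervalIntegrable (w · I) volume a b) (x : Fin n → ℂ) (J : Finset (Fin n)) :
    contract x (fun I ↦ ∫ t in a..b, w t I) J = ∫ t in a..b, contract x (w t) J := by
  simp only [contract_apply]
  rw [intervalIntegral.integral_finsetSum
    fun j _ ↦ ((hw (insert j J)).const_mul _).const_mul _]
  simp only [intervalIntegral.integral_const_mul]

theorem dK_P_eq_intervalIntegral (hUo : IsOpen U) (hU : Convex ℝ U)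
    (hω : ∀ I, DifferentiableOn ℂ (ω I) (U ×ˢ U)) (J : Finset (Fin n)) {p : Pt n}
    (hp : p ∈ U ×ˢ U) :
    dK n (P n ω) J p =
      ∫ t in (0 : ℝ)..1, (t : ℂ) ^ J.card * contract (p.1 - p.2) (dz ω · (fromDiagonal p t)) J := by
  have hint : ∀ I, IntervalIntegrable
      (fun t : ℝ ↦ (t : ℂ) ^ (I.card - 1) * dz ω I (fromDiagonal p t)) volume 0 1 :=
    fun I ↦ intervalIntegrable_pow_mul_comp_fromDiagonal hU
      (differentiableOn_dz (hUo.prod hUo) hω I).continuousOn hp _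
  simp only [dK_eq_contract, P_eq_intervalIntegral_dz hUo hU hω _ hp,
    contract_intervalIntegral hint, contract_pow_card_sub_one_mul]

theorem hasDerivAt_pow_card_mul_comp_fromDiagonal {p : Pt n} {t : ℝ}
    (hω : ∀ I, DifferentiableAt ℂ (ω I) (fromDiagonal p t)) (J : Finset (Fin n)) :
    HasDerivAt (fun t : ℝ ↦ (t : ℂ) ^ J.card * ω J (fromDiagonal p t))
      ((t : ℂ) ^ J.card * contract (p.1 - p.2) (dz ω · (fromDiagonal p t)) J +
        (t : ℂ) ^ (J.card - 1) * dz (dK n ω) J (fromDiagonal p t)) t := by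
  rw [cartan_formula hω (fst_sub_snd_fromDiagonal p t)]
  have hpow : HasDerivAt (fun t : ℝ ↦ (t : ℂ) ^ J.card) (J.card * (t : ℂ) ^ (J.card - 1)) t :=
    (hasDerivAt_pow J.card (t : ℂ)).comp_ofReal
  exact hpow.mul
    (((hω J).hasFDerivAt.restrictScalars ℝ).comp_hasDerivAt t (hasDerivAt_fromDiagonal p t))

theorem dK_P_add_P_dK (hUo : IsOpen U) (hU : Convex ℝ U)
    (hω : ∀ I, DifferentiableOn ℂ (ω I) (U ×ˢ U)) (J : Finset (Fin n)) {p : Pt n}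
    (hp : p ∈ U ×ˢ U) :
    dK n (P n ω) J p + P n (dK n ω) J p = ω J p - res n ω J p := by
  have hopen := hUo.prod hUo
  have hdK := differentiableOn_dK hω
  have hint_contract : IntervalIntegrable (fun t : ℝ ↦ (t : ℂ) ^ J.card *
      contract (p.1 - p.2) (dz ω · (fromDiagonal p t)) J) volume 0 1 :=
    intervalIntegrable_pow_mul_comp_fromDiagonal hU
      (continuousOn_contract (fun I ↦ (differentiableOn_dz hopen hω I).continuousOn) _ J) hp _
  have hint_dz : IntervalIntegrable (fun t : ℝ ↦ (t : ℂ) ^ (J.card - 1) *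
      dz (dK n ω) J (fromDiagonal p t)) volume 0 1 :=
    intervalIntegrable_pow_mul_comp_fromDiagonal hU
      (differentiableOn_dz hopen hdK J).continuousOn hp _
  rw [dK_P_eq_intervalIntegral hUo hU hω J hp, P_eq_intervalIntegral_dz hUo hU hdK J hp,
    ← intervalIntegral.integral_add hint_contract hint_dz,
    intervalIntegral.integral_eq_sub_of_hasDerivAt
      (f := fun t : ℝ ↦ (t : ℂ) ^ J.card * ω J (fromDiagonal p t)) (fun t ht ↦ ?_)
      (hint_contract.add hint_dz)]
  · obtain rfl | hJ := J.eq_empty_or_nonempty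
    · simp [res, fromDiagonal]
    · simp [res, fromDiagonal, hJ.ne_empty, hJ.card_ne_zero]
  · rw [uIcc_of_le zero_le_one] at ht
    exact hasDerivAt_pow_card_mul_comp_fromDiagonal (fun I ↦ (hω I).differentiableAt
      (hopen.mem_nhds (fromDiagonal_mem hU hp ht))) J

end KoszulHomotopy

section TotalComplex

variable {U : Set (Fin n → ℂ)} {m : ℕ} {b c : Coeff2 n}

theorem dT_apply (c : Coeff2 n) (I J : Finset (Fin n)) (p : Pt n) :
    dT n c I J p = dK n (c · J) I p + (-1) ^ I.card * dK n (c I) J p := rfl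

theorem dT_add (b c : Coeff2 n) (I J : Finset (Fin n)) (p : Pt n) :
    dT n (b + c) I J p = dT n b I J p + dT n c I J p := by
  simp only [dT, Pi.add_apply, mul_add, Finset.sum_add_distrib]
  ring

theorem dT_sub (b c : Coeff2 n) (I J : Finset (Fin n)) (p : Pt n) :
    dT n (b - c) I J p = dT n b I J p - dT n c I J p := by
  simp only [dT, Pi.sub_apply, mul_sub, Finset.sum_sub_distrib]
  ring

theorem dT_diag (c : Coeff2 n) (I J : Finset (Fin n)) (z : Fin n → ℂ) :
    dT n c I J (z, z) = 0 := by
  simp [dT]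

theorem dT_dT (c : Coeff2 n) (I J : Finset (Fin n)) (p : Pt n) : dT n (dT n c) I J p = 0 := by
  set x := p.1 - p.2
  have hdT : ∀ I J, dT n c I J p =
      contract x (c · J p) I + (-1) ^ I.card * contract x (c I · p) J := by
    simp [dT_apply, dK_eq_contract, x]
  have hfst : contract x (fun I' ↦ dT n c I' J p) I =
      -((-1) ^ I.card * contract x (fun I' ↦ contract x (c I' · p) J) I) := by
    rw [show (fun I' ↦ dT n c I' J p) = contract x (c · J p) +
      fun I' ↦ (-1) ^ I'.card * contract x (c I' · p) J from funext fun I' ↦ hdT I' J, map_add,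
      contract_contract, zero_add, contract_neg_one_pow_card_mul]
  have hsnd : contract x (fun J' ↦ dT n c I J' p) J =
      contract x (fun J' ↦ contract x (c · J' p) I) J := by
    rw [show (fun J' ↦ dT n c I J' p) = (fun J' ↦ contract x (c · J' p) I) +
      (-1 : ℂ) ^ I.card • contract x (c I · p) from funext fun J' ↦ hdT I J', map_add,
      map_smul, contract_contract, smul_zero, add_zero]
  rw [dT_apply, dK_eq_contract, dK_eq_contract, hfst, hsnd,
    contract_comm x x (fun I' J' ↦ c I' J' p)]
  ring

theorem MemT.add (hb : MemT n U m b) (hc : MemT n U m c) : MemT n U m (b + c) :=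
  ⟨fun I J hIJ ↦ by simp [hb.1 I J hIJ, hc.1 I J hIJ], fun I J ↦ (hb.2 I J).add (hc.2 I J)⟩

theorem MemT.sub (hb : MemT n U m b) (hc : MemT n U m c) : MemT n U m (b - c) :=
  ⟨fun I J hIJ ↦ by simp [hb.1 I J hIJ, hc.1 I J hIJ], fun I J ↦ (hb.2 I J).sub (hc.2 I J)⟩

theorem MemT.dT (hb : MemT n U (m + 1) b) : MemT n U m (dT n b) := by
  refine ⟨fun I J hIJ ↦ funext fun p ↦ ?_, fun I J ↦ ?_⟩
  · have hfst : dK n (b · J) I p = 0 := dK_eq_zero fun j hj ↦ by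
      rw [hb.1 _ _ (by rw [Finset.card_insert_of_notMem hj]; lia), Pi.zero_apply]
    have hsnd : dK n (b I) J p = 0 := dK_eq_zero fun j hj ↦ by
      rw [hb.1 _ _ (by rw [Finset.card_insert_of_notMem hj]; lia), Pi.zero_apply]
    simp [dT_apply, hfst, hsnd]
  · exact (differentiableOn_dK (hb.2 · J) I).add
      ((differentiableOn_dK (hb.2 I) J).const_mul _)

/-- The cycles of the total complex over `U × U`. -/
def IsCycle (U : Set (Fin n → ℂ)) (c : Coeff2 n) : Prop :=
  ∀ I J, ∀ p ∈ U ×ˢ U, dT n c I J p = 0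

/-- The boundaries of degree `-m` of the total complex over `U × U`; only the values of `c` on
`U × U` matter. -/
def IsBoundary (U : Set (Fin n → ℂ)) (m : ℕ) (c : Coeff2 n) : Prop :=
  ∃ b, MemT n U (m + 1) b ∧ ∀ I J, ∀ p ∈ U ×ˢ U, dT n b I J p = c I J p

theorem IsBoundary.diag_eq_zero (hc : IsBoundary U m c) (I J : Finset (Fin n)) {z : Fin n → ℂ}
    (hz : z ∈ U) : c I J (z, z) = 0 := by
  obtain ⟨b, -, hbc⟩ := hc
  rw [← hbc I J (z, z) ⟨hz, hz⟩, dT_diag]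

/-- The homotopy operator `P` on the second tensor factor, `η ⊗ ξ ↦ (-1)^i η ⊗ P ξ` for
`η ∈ K^{-i}`. -/
noncomputable def tensorP (c : Coeff2 n) : Coeff2 n := fun I J p ↦ (-1) ^ I.card * P n (c I) J p

theorem MemT.tensorP (hUo : IsOpen U) (hU : Convex ℝ U) (hc : MemT n U m c) :
    MemT n U (m + 1) (tensorP c) := by
  refine ⟨fun I J hIJ ↦ funext fun p ↦ ?_, fun I J ↦
    (differentiableOn_P hUo hU (hc.2 I) J).const_mul _⟩
  have hP : P n (c I) J p = 0 := P_eq_zero fun j hj t _ ↦ by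
    have hcard := Finset.card_erase_add_one hj
    rw [hc.1 I (J.erase j) (by lia)]
  simp [TwistedKoszul.tensorP, hP]

theorem dT_tensorP (hUo : IsOpen U) (hU : Convex ℝ U)
    (hc : ∀ I J, DifferentiableOn ℂ (c I J) (U ×ˢ U)) (I J : Finset (Fin n)) {p : Pt n}
    (hp : p ∈ U ×ˢ U) :
    dT n (tensorP c) I J p =
      dK n (tensorP c · J) I p + (c I J p - res n (c I) J p - P n (dK n (c I)) J p) := by
  have hdK : dK n (tensorP c I) J p = (-1) ^ I.card * dK n (P n (c I)) J p := by
    simp only [dK, tensorP, Finset.mul_sum]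
    exact Finset.sum_congr rfl fun j _ ↦ by ring
  rw [dT_apply, hdK, ← mul_assoc, ← mul_pow, ← dK_P_add_P_dK hUo hU (hc I) J hp]
  simp

theorem IsCycle.sub_dT (hc : IsCycle U c) (b : Coeff2 n) : IsCycle U (c - dT n b) :=
  fun I J p hp ↦ by rw [dT_sub, hc I J p hp, dT_dT, sub_zero]

theorem IsCycle.dK_snd_eq_zero (hc : IsCycle U c) {J : Finset (Fin n)}
    (hJ : ∀ I, ∀ p ∈ U ×ˢ U, c I J p = 0) (I : Finset (Fin n)) {p : Pt n} (hp : p ∈ U ×ˢ U) :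
    dK n (c I) J p = 0 := by
  have hfst : dK n (c · J) I p = 0 := dK_eq_zero fun j _ ↦ hJ _ p hp
  simpa [dT_apply, hfst] using hc I J p hp

theorem IsCycle.sub_dT_tensorP_eq_zero (hUo : IsOpen U) (hU : Convex ℝ U)
    (hhol : ∀ I J, DifferentiableOn ℂ (c I J) (U ×ˢ U)) (hc : IsCycle U c)
    (hdiag : ∀ I, ∀ z ∈ U, c I ∅ (z, z) = 0) {J : Finset (Fin n)}
    (hJ : ∀ j ∈ J, ∀ I, ∀ p ∈ U ×ˢ U, c I (J.erase j) p = 0) (I : Finset (Fin n)) {p : Pt n}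
    (hp : p ∈ U ×ˢ U) :
    (c - dT n (tensorP c)) I J p = 0 := by
  have hdK : dK n (tensorP c · J) I p = 0 := dK_eq_zero fun j _ ↦ by
    rw [tensorP, P_eq_zero_of_eqOn hUo hU (fun k hk ↦ hJ k hk _) hp, mul_zero]
  have hP : P n (dK n (c I)) J p = 0 := P_eq_zero_of_eqOn hUo hU
    (fun j hj _ hq ↦ hc.dK_snd_eq_zero (hJ j hj) I hq) hp
  have hres : res n (c I) J p = 0 := by
    rw [res, hdiag I p.2 hp.2, ite_self]
  change c I J p - dT n (tensorP c) I J p = 0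
  rw [dT_tensorP hUo hU hhol I J hp, hdK, hP, hres]
  ring

/-- Induction on `d`: subtracting the boundary of `tensorP c` from `c` kills one more degree of the
second factor. -/
theorem IsCycle.isBoundary_of_eq_zero_of_card_add_le (hUo : IsOpen U) (hU : Convex ℝ U) (d : ℕ)
    (hmem : MemT n U m c) (hc : IsCycle U c) (hdiag : ∀ I, ∀ z ∈ U, c I ∅ (z, z) = 0)
    (hzero : ∀ I J, J.card + d ≤ m → ∀ p ∈ U ×ˢ U, c I J p = 0) : IsBoundary U m c := by
  induction d generalizing c with
  | zero =>
    refine ⟨0, ⟨by simp, fun _ _ ↦ differentiableOn_const 0⟩, fun I J p hp ↦ ?_⟩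
    have hIJ : c I J p = 0 := by
      obtain hJ | hJ := le_or_gt J.card m
      · exact hzero I J hJ p hp
      · rw [hmem.1 I J (by lia), Pi.zero_apply]
    simp [hIJ, dT]
  | succ d ih =>
    have hstep : IsBoundary U m (c - dT n (tensorP c)) := by
      refine ih (hmem.sub (hmem.tensorP hUo hU).dT) (hc.sub_dT _)
        (fun I z hz ↦ by simp [hdiag I z hz, dT_diag])
        fun I J hJ p hp ↦ hc.sub_dT_tensorP_eq_zero hUo hU hmem.2 hdiag (fun j hj I' ↦ ?_) I hp
      have hcard := Finset.card_erase_add_one hj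
      exact hzero I' _ (by lia)
    obtain ⟨b, hb, hbc⟩ := hstep
    refine ⟨b + tensorP c, hb.add (hmem.tensorP hUo hU), fun I J p hp ↦ ?_⟩
    rw [dT_add, hbc I J p hp]
    simp

theorem IsCycle.isBoundary_of_diag_eq_zero (hUo : IsOpen U) (hU : Convex ℝ U)
    (hmem : MemT n U m c) (hc : IsCycle U c)
    (hdiag : ∀ I, I.card = m → ∀ z ∈ U, c I ∅ (z, z) = 0) : IsBoundary U m c := by
  refine hc.isBoundary_of_eq_zero_of_card_add_le hUo hU (m + 1) hmem (fun I z hz ↦ ?_)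
    fun I J hJ ↦ by lia
  by_cases hI : I.card = m
  · exact hdiag I hI z hz
  · rw [hmem.1 I ∅ (by simpa using hI), Pi.zero_apply]

end TotalComplex

section ShuffleCycle

/-- The sign of the shuffle putting `(A, B)` in increasing order, so that
`e^A ∧ e^B = shuffleSign A B • e^{A ∪ B}` for disjoint `A` and `B`. -/
noncomputable def shuffleSign (A B : Finset (Fin n)) : ℂ := ∏ a ∈ A, sgn n a B

theorem shuffleSign_insert_left {j : Fin n} {A : Finset (Fin n)} (hj : j ∉ A)
    (B : Finset (Fin n)) : shuffleSign (insert j A) B = sgn n j B * shuffleSign A B :=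
  Finset.prod_insert hj

theorem shuffleSign_insert_right {j : Fin n} {A B : Finset (Fin n)} (hjA : j ∉ A) (hjB : j ∉ B) :
    shuffleSign A (insert j B) = (-1) ^ A.card * sgn n j A * shuffleSign A B := by
  have hsgn : ∏ a ∈ A, (if j < a then -1 else 1 : ℂ) = (-1) ^ A.card * sgn n j A := by
    rw [sgn, ← Finset.prod_const, ← Finset.prod_const, Finset.prod_filter,
      ← Finset.prod_mul_distrib]
    refine Finset.prod_congr rfl fun a ha ↦ ?_
    rcases (ne_of_mem_of_not_mem ha hjA).lt_or_gt with h | h <;> simp [h, h.not_gt]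
  simp only [shuffleSign, sgn_insert _ hjB, Finset.prod_mul_distrib, hsgn]

/-- The element `∑_I g_I(z) ∏_{i ∈ I} (e^i ⊗ 1 - 1 ⊗ e^i)` of the total complex. -/
noncomputable def shuffleCycle (g : Finset (Fin n) → (Fin n → ℂ) → ℂ) : Coeff2 n := fun A B p ↦
  if Disjoint A B then (-1) ^ B.card * shuffleSign A B * g (A ∪ B) p.1 else 0

variable (g : Finset (Fin n) → (Fin n → ℂ) → ℂ)

theorem shuffleCycle_empty_right (I : Finset (Fin n)) (p : Pt n) :
    shuffleCycle g I ∅ p = g I p.1 := by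
  simp [shuffleCycle, shuffleSign, sgn]

theorem interior_shuffleCycle (j : Fin n) (A B : Finset (Fin n)) (p : Pt n) :
    interior j (shuffleCycle g · B p) A + (-1) ^ A.card * interior j (shuffleCycle g A · p) B =
      0 := by
  by_cases hjA : j ∈ A
  · simp [interior_apply, shuffleCycle, hjA]
  by_cases hjB : j ∈ B
  · simp [interior_apply, shuffleCycle, hjB]
  by_cases hAB : Disjoint A B
  · have hsq : ((-1 : ℂ) ^ A.card) * (-1) ^ A.card = 1 := by simp [← mul_pow]
    simp only [interior_apply, shuffleCycle, hjA, hjB, hAB, if_false, if_true,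
      Finset.disjoint_insert_left, Finset.disjoint_insert_right, not_false_eq_true, and_self,
      shuffleSign_insert_left hjA, shuffleSign_insert_right hjA hjB, Finset.insert_union,
      Finset.union_insert, Finset.card_insert_of_notMem hjB]
    linear_combination -(sgn n j B * (-1) ^ B.card * sgn n j A * shuffleSign A B *
      g (insert j (A ∪ B)) p.1) * hsq
  · simp [interior_apply, shuffleCycle, hjA, hjB, hAB]

theorem dT_shuffleCycle (A B : Finset (Fin n)) (p : Pt n) : dT n (shuffleCycle g) A B p = 0 := by
  simp only [dT_apply, dK_eq_contract, contract_apply_eq_sum, Finset.mul_sum,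
    ← Finset.sum_add_distrib]
  refine Finset.sum_eq_zero fun j _ ↦ ?_
  rw [mul_left_comm, ← mul_add, interior_shuffleCycle, mul_zero]

theorem memT_shuffleCycle {g : Finset (Fin n) → (Fin n → ℂ) → ℂ} {U : Set (Fin n → ℂ)} {m : ℕ}
    (hsupp : ∀ I, I.card ≠ m → g I = 0) (hg : ∀ I, DifferentiableOn ℂ (g I) U) :
    MemT n U m (shuffleCycle g) := by
  refine ⟨fun A B hAB ↦ funext fun p ↦ ?_, fun A B ↦ ?_⟩ <;> by_cases hdisj : Disjoint A B
  · simp [shuffleCycle, hsupp (A ∪ B) (by rwa [Finset.card_union_of_disjoint hdisj])]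
  · simp [shuffleCycle, hdisj]
  · exact (((hg _).comp differentiable_fst.differentiableOn fun _ hp ↦ hp.1).const_mul _).congr
      fun p _ ↦ if_pos hdisj
  · exact (differentiableOn_const 0).congr fun p _ ↦ if_neg hdisj

theorem exists_isCycle_diag_eq {g : Finset (Fin n) → (Fin n → ℂ) → ℂ} {U : Set (Fin n → ℂ)}
    (hg : ∀ I, DifferentiableOn ℂ (g I) U) (m : ℕ) :
    ∃ c, MemT n U m c ∧ IsCycle U c ∧ ∀ I, I.card = m → ∀ z ∈ U, c I ∅ (z, z) = g I z := by
  refine ⟨shuffleCycle fun I ↦ if I.card = m then g I else 0,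
    memT_shuffleCycle (fun I hI ↦ if_neg hI) fun I ↦ ?_, fun A B p _ ↦ dT_shuffleCycle _ A B p,
    fun I hI z _ ↦ by simp [shuffleCycle_empty_right, hI]⟩
  split_ifs
  · exact hg I
  · exact differentiableOn_const 0

end ShuffleCycle

/-- For `0 ≤ m ≤ n`, the homology of the total complex
`(T^•, d_⊗)` in degree `-m` is isomorphic to `Λ^m(ℂⁿ) ⊗ O(U)` (holomorphic
`m`-forms on `U`, via `e^I ↦ dz^I`), the isomorphism being induced by sending a
cycle `c` to the restriction to the diagonal `ζ = z` of its component in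
`K^{-m} ⊗ K^0 ≅ K^{-m}`, i.e. to the family `I ↦ (z ↦ c(I, ∅)(z, z))`
(`|I| = m`); concretely:
(i) a cycle `c ∈ T^{-m}` maps to `0` iff it is a boundary (injectivity of the
induced map on homology);
(ii) every element of `Λ^m(ℂⁿ) ⊗ O(U)` is the image of some cycle
(surjectivity);
(iii) for `m > n` the homology of `(T^•, d_⊗)` in degree `-m` vanishes: every
cycle is a boundary. -/
theorem statement12 (n : ℕ) (hn : 1 ≤ n)
    (U : Set (Fin n → ℂ)) (hUopen : IsOpen U) (hUconv : Convex ℝ U)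
    (hUne : U.Nonempty) :
    (∀ m : ℕ, m ≤ n → ∀ c : Coeff2 n, MemT n U m c →
      (∀ I J : Finset (Fin n), ∀ p ∈ U ×ˢ U, dT n c I J p = 0) →
      ((∀ I : Finset (Fin n), I.card = m → ∀ z ∈ U, c I ∅ (z, z) = 0) ↔
        (∃ b : Coeff2 n, MemT n U (m + 1) b ∧
          ∀ I J : Finset (Fin n), ∀ p ∈ U ×ˢ U, dT n b I J p = c I J p))) ∧
    (∀ m : ℕ, m ≤ n →
      ∀ g : Finset (Fin n) → (Fin n → ℂ) → ℂ,
        (∀ I : Finset (Fin n), DifferentiableOn ℂ (g I) U) →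
        ∃ c : Coeff2 n, MemT n U m c ∧
          (∀ I J : Finset (Fin n), ∀ p ∈ U ×ˢ U, dT n c I J p = 0) ∧
          ∀ I : Finset (Fin n), I.card = m → ∀ z ∈ U, c I ∅ (z, z) = g I z) ∧
    (∀ m : ℕ, n < m → ∀ c : Coeff2 n, MemT n U m c →
      (∀ I J : Finset (Fin n), ∀ p ∈ U ×ˢ U, dT n c I J p = 0) →
      ∃ b : Coeff2 n, MemT n U (m + 1) b ∧
        ∀ I J : Finset (Fin n), ∀ p ∈ U ×ˢ U, dT n b I J p = c I J p) := by
  refine ⟨fun m _ c hmem hc ↦ ⟨IsCycle.isBoundary_of_diag_eq_zero hUopen hUconv hmem hc,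
      fun hb I _ z hz ↦ IsBoundary.diag_eq_zero hb I ∅ hz⟩,
    fun m _ g hg ↦ exists_isCycle_diag_eq hg m,
    fun m hm c hmem hc ↦ IsCycle.isBoundary_of_diag_eq_zero hUopen hUconv hmem hc fun I hI ↦ ?_⟩
  have hcard : I.card ≤ n := by simpa using I.card_le_univ
  lia

end TwistedKoszul
end
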